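/- Every planar graph of maximum degree 4 admits a two-page book embedding, i.e., there is a linear order of its vertices and a partition of its edges into two sets (pages) such that no two edges assigned to the same page have endpoints that alternate in the linear order. -/

import Mathlib

open Set

universe u

/-- A topological embedding of a simple graph in the plane: vertices are mapped to
distinct points and every edge is realized by a simple arc joining the images of its
endpoints, such that two arcs of distinct edges meet only in common endpoints and no
vertex point lies in the interior of an arc. -/
structure PlaneEmbedding {V : Type u} (G : SimpleGraph V) where
  pos : V → ℝ × ℝ
  pos_inj : Function.Injective pos
  arc : ∀ ⦃u v : V⦄, G.Adj u v → Set (ℝ × ℝ)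
  arc_symm : ∀ ⦃u v : V⦄ (h : G.Adj u v), arc h.symm = arc h
  arc_curve : ∀ ⦃u v : V⦄ (h : G.Adj u v), ∃ f : ℝ → ℝ × ℝ,
    ContinuousOn f (Set.Icc 0 1) ∧ Set.InjOn f (Set.Icc 0 1) ∧
    f 0 = pos u ∧ f 1 = pos v ∧ f '' Set.Icc 0 1 = arc h
  arc_inter : ∀ ⦃u v w z : V⦄ (h₁ : G.Adj u v) (h₂ : G.Adj w z),
    s(u, v) ≠ s(w, z) → arc h₁ ∩ arc h₂ ⊆ ({pos u, pos v} ∩ {pos w, pos z} : Set (ℝ × ℝ))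
  pos_arc : ∀ ⦃u v : V⦄ (h : G.Adj u v) (w : V), pos w ∈ arc h → w = u ∨ w = v

/-- A graph is planar if it admits a topological embedding in the plane. -/
def SimpleGraph.IsPlanar {V : Type u} (G : SimpleGraph V) : Prop :=
  Nonempty (PlaneEmbedding G)

/-- The point set covered by a plane embedding. -/
def PlaneEmbedding.drawing {V : Type u} {G : SimpleGraph V} (E : PlaneEmbedding G) :
    Set (ℝ × ℝ) :=
  Set.range E.pos ∪ ⋃ (u : V) (v : V) (h : G.Adj u v), E.arc h

/-- A face of a plane embedding is a connected component of the complement of the drawing. -/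
def PlaneEmbedding.IsFace {V : Type u} {G : SimpleGraph V} (E : PlaneEmbedding G)
    (F : Set (ℝ × ℝ)) : Prop :=
  ∃ p, p ∉ E.drawing ∧ F = connectedComponentIn E.drawingᶜ p

/-- A vertex is incident to a face if its point lies on the boundary of the face. -/
def PlaneEmbedding.VertexOnFace {V : Type u} {G : SimpleGraph V} (E : PlaneEmbedding G)
    (v : V) (F : Set (ℝ × ℝ)) : Prop :=
  E.pos v ∈ closure F

/-- Maximum degree at most `d`. -/
def SimpleGraph.MaxDegreeLE {V : Type u} (G : SimpleGraph V) (d : ℕ) : Prop :=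
  ∀ v : V, (G.neighborSet v).ncard ≤ d

/-- A graph is triconnected (3-connected) if it has more than three vertices, is
connected, and stays connected after removing any two vertices. -/
def SimpleGraph.IsTriconnected {V : Type u} (G : SimpleGraph V) : Prop :=
  3 < Nat.card V ∧ G.Connected ∧
    ∀ u v : V, (G.induce {w : V | w ≠ u ∧ w ≠ v}).Connected

/-- A graph is biconnected (2-connected) if it has more than two vertices, is
connected, and stays connected after removing any single vertex. -/
def SimpleGraph.IsBiconnected {V : Type u} (G : SimpleGraph V) : Prop :=
  2 < Nat.card V ∧ G.Connected ∧ ∀ u : V, (G.induce {w : V | w ≠ u}).Connected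

/-- A graph is subhamiltonian if it is a spanning subgraph of a planar hamiltonian graph. -/
def SimpleGraph.IsSubhamiltonian {V : Type u} [Fintype V] (G : SimpleGraph V) : Prop :=
  ∃ H : SimpleGraph V, G ≤ H ∧ H.IsPlanar ∧ (letI := Classical.decEq V; H.IsHamiltonian)

/-- The graph consisting of the edges of the cyclic vertex sequence `σ`. -/
def cyclicSuccGraph {W : Type u} (σ : ZMod (Nat.card W) ≃ W) : SimpleGraph W :=
  SimpleGraph.fromRel fun u v => ∃ i, u = σ i ∧ v = σ (i + 1)

/-- The cyclic ordering `σ` of all vertices of `G` is a subhamiltonian cycle for `G` if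
adding the edges between consecutive vertices of `σ` keeps the graph planar. -/
def SimpleGraph.IsSubhamiltonianCycle {W : Type u} (G : SimpleGraph W)
    (σ : ZMod (Nat.card W) ≃ W) : Prop :=
  SimpleGraph.IsPlanar (G ⊔ cyclicSuccGraph σ)

/-- The edges (pairs of consecutive vertices) of the cyclic sequence `σ`. -/
def cycleEdges {W : Type u} (σ : ZMod (Nat.card W) ≃ W) : Set (Sym2 W) :=
  {e | ∃ i, e = s(σ i, σ (i + 1))}

/-- The subhamiltonian cycle `σ` crosses the face `F` at position `i` if the two
consecutive vertices `σ i` and `σ (i+1)` are both incident to `F` but not adjacent. -/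
def CrossesFaceAt {V : Type u} {G : SimpleGraph V} (E : PlaneEmbedding G)
    (σ : ZMod (Nat.card V) ≃ V) (F : Set (ℝ × ℝ)) (i : ZMod (Nat.card V)) : Prop :=
  E.VertexOnFace (σ i) F ∧ E.VertexOnFace (σ (i + 1)) F ∧ ¬ G.Adj (σ i) (σ (i + 1))

/-- A separating triangle: a triangle whose removal disconnects the graph. -/
def SimpleGraph.IsSepTriangle {V : Type u} (G : SimpleGraph V) (a b c : V) : Prop :=
  G.Adj a b ∧ G.Adj b c ∧ G.Adj a c ∧
    ¬ (G.induce {v : V | v ≠ a ∧ v ≠ b ∧ v ≠ c}).Connected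

section Triangle

variable {V : Type u} {G : SimpleGraph V} (E : PlaneEmbedding G) {a b c : V}

/-- The Jordan curve formed by the drawing of the triangle `a b c`. -/
def triangleDrawing (hab : G.Adj a b) (hbc : G.Adj b c) (hac : G.Adj a c) :
    Set (ℝ × ℝ) :=
  E.arc hab ∪ E.arc hbc ∪ E.arc hac

/-- The vertices strictly inside the triangle `a b c` (bounded side of the Jordan curve). -/
def insideTriangle (hab : G.Adj a b) (hbc : G.Adj b c) (hac : G.Adj a c) : Set V :=
  {v | v ≠ a ∧ v ≠ b ∧ v ≠ c ∧
    Bornology.IsBounded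
      (connectedComponentIn (triangleDrawing E hab hbc hac)ᶜ (E.pos v))}

/-- The vertices strictly outside the triangle `a b c` (unbounded side of the Jordan curve). -/
def outsideTriangle (hab : G.Adj a b) (hbc : G.Adj b c) (hac : G.Adj a c) : Set V :=
  {v | v ≠ a ∧ v ≠ b ∧ v ≠ c ∧
    ¬ Bornology.IsBounded
      (connectedComponentIn (triangleDrawing E hab hbc hac)ᶜ (E.pos v))}

end Triangle

/-- Two edges drawn on the same page of a book embedding cross iff their endpoints
alternate along the spine. -/
def Alternates {W : Type u} (x : W → ℝ) (e e' : Sym2 W) : Prop :=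
  ∃ a b p q : W, e = s(a, b) ∧ e' = s(p, q) ∧ x a < x p ∧ x p < x b ∧ x b < x q

/-!
The topological input is that a planar graph has a rotation system in which the edges outside a
subtree never alternate along the walk around that subtree. To obtain it from a drawing, divide
every arc into a middle part and two ends, assign the ends to the vertices, and replace all these
sets by the nearby points of a fine square grid: this shows the graph to be a minor of the square
lattice. In the lattice every cycle modulo 2 bounds a set of cells. Applied to the cycle that one
edge closes with the tree, this gives a function on the darts along the walk that jumps exactly at
the two darts of that edge, so no other edge joins the two parts of the walk. Minors inherit the
property because their subtrees lift.

For a connected graph of maximum degree 4, list the darts in the order of the walk around a spanning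
tree, put the tree edges on one page and the others on the other page, and place each vertex at
one of its darts. Tree edges never alternate, whichever darts are chosen. Neither do the others if
the non-tree darts of every vertex form a block between two consecutive tree darts and the vertex is
placed there. This fails only at a *straight* vertex: one of degree 4 with exactly two tree
edges, which are opposite.

To build a tree in which no vertex but the root is straight, attach a maximal path that turns at
each of its vertices and then the remaining vertices by induction. If the last vertex of the path
has become straight, its two non-tree edges lead back to the path or to the part of the tree built
before it, and adding one of them in exchange for a suitable edge of the path repairs the tree.

A root of degree other than 4 is never straight. If all degrees are 4, start instead from all but
one edge of a facial cycle, and move the missing edge to the page of the tree, so that no vertex of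
the cycle is straight with respect to both. The walk begins along the cycle, and when all vertices
are placed after this first stretch the missing edge alternates with no tree edge.
-/

open scoped List

section Lists

variable {α β : Type*}

theorem exists_isRotated_cons {l : List α} {a : α} (h : a ∈ l) : ∃ t, l ~r a :: t := by
  obtain ⟨s, t, rfl⟩ := List.append_of_mem h
  exact ⟨t ++ s, List.isRotated_append⟩

theorem isRotated_filterMap {l l' : List α} (h : l ~r l') (f : α → Option β) :
    l.filterMap f ~r l'.filterMap f := by
  obtain ⟨n, hn, rfl⟩ := List.isRotated_iff_mod.1 h
  rw [List.rotate_eq_drop_append_take hn, List.filterMap_append]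
  nth_rw 1 [← List.take_append_drop n l]
  rw [List.filterMap_append]
  exact List.isRotated_append

theorem isRotated_filter {l l' : List α} (h : l ~r l') (p : α → Bool) :
    l.filter p ~r l'.filter p := by
  simpa only [List.filterMap_eq_filter] using isRotated_filterMap h (Option.guard p)

theorem isChain_concat_imp_of_mem {R S : α → α → Prop} {l : List α} {a : α}
    (h : List.IsChain R (l ++ [a])) (H : ∀ x ∈ l, ∀ y, R x y → S x y) :
    List.IsChain S (l ++ [a]) := by
  induction l with
  | nil => exact .singleton a
  | cons x l ih =>
    rw [List.cons_append, List.isChain_cons] at h ⊢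
    exact ⟨fun y hy => H x List.mem_cons_self y (h.1 y hy),
      ih h.2 fun x hx => H x (List.mem_cons_of_mem _ hx)⟩

/-- No two pairs of elements related by `r`, with no element in common, alternate in `l`. -/
def NoAlternation (r : α → α → Prop) (l : List α) : Prop :=
  ∀ ⦃a b c d : α⦄, r a c → r b d → a ≠ b → b ≠ c → c ≠ d → d ≠ a → ¬ [a, b, c, d] <+ l

theorem exists_isRotated_sublist {l m m' : List α} (h : l <+ m) (hm : m ~r m') :
    ∃ l', l ~r l' ∧ l' <+ m' := by
  obtain ⟨n, hn, rfl⟩ := List.isRotated_iff_mod.1 hm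
  rw [← List.take_append_drop n m, List.sublist_append_iff] at h
  obtain ⟨l₁, l₂, rfl, h₁, h₂⟩ := h
  refine ⟨l₂ ++ l₁, List.isRotated_append, ?_⟩
  rw [List.rotate_eq_drop_append_take hn]
  exact h₂.append h₁

theorem NoAlternation.rotate {r : α → α → Prop} {l l' : List α} (h : NoAlternation r l)
    (hr : ∀ a b, r a b → r b a) (hl : l ~r l') : NoAlternation r l' := by
  intro a b c d hac hbd hab hbc hcd hda hs
  obtain ⟨t, ht, hs'⟩ := exists_isRotated_sublist hs hl.symm
  obtain ⟨n, hn, rfl⟩ := List.isRotated_iff_mod.1 ht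
  have hn : n ≤ 4 := hn
  interval_cases n
  · exact h hac hbd hab hbc hcd hda hs'
  · exact h hbd (hr _ _ hac) hbc hcd hda hab hs'
  · exact h (hr _ _ hac) (hr _ _ hbd) hcd hda hab hbc hs'
  · exact h (hr _ _ hbd) hac hda hab hbc hcd hs'
  · exact h hac hbd hab hbc hcd hda (List.rotate_length [a, b, c, d] ▸ hs')

theorem sublist_of_concat_sublist_concat {l m : List α} {a b : α} (h : l ++ [a] <+ m ++ [b])
    (hab : a ≠ b) : l ++ [a] <+ m := by
  rw [← List.reverse_sublist] at h ⊢
  rw [List.reverse_concat, List.reverse_concat] at h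
  rw [List.reverse_concat]
  exact h.of_cons_of_ne hab

theorem NoAlternation.append {r r₁ r₂ : α → α → Prop} {l m : List α} {u w : α}
    (hl : NoAlternation r₁ (l ++ [u])) (hm : NoAlternation r₂ (m ++ [w]))
    (h₁ : ∀ a ∈ l ++ [u], ∀ b ∈ l ++ [u], r a b → r₁ a b)
    (h₂ : ∀ a ∈ m ++ [w], ∀ b ∈ m ++ [w], r a b → r₂ a b)
    (huw : ∀ a ∈ l ++ [u], ∀ b ∈ m ++ [w], r a b ∨ r b a → a = u ∧ b = w)
    (hu : r₁ u u) (hw : r₂ w w) :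
    NoAlternation r (l ++ [u] ++ (m ++ [w])) := by
  intro a b c d hac hbd hab hbc hcd hda hs
  rw [List.sublist_append_iff] at hs
  obtain ⟨s, t, hst, hs, ht⟩ := hs
  have hs' := hs.subset
  have ht' := ht.subset
  rcases s with _ | ⟨a', _ | ⟨b', _ | ⟨c', _ | ⟨d', s⟩⟩⟩⟩ <;>
    simp only [List.nil_append, List.cons_append, List.cons.injEq] at hst
  · subst hst
    exact hm (h₂ _ (ht' (by simp)) _ (ht' (by simp)) hac)
      (h₂ _ (ht' (by simp)) _ (ht' (by simp)) hbd) hab hbc hcd hda ht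
  · obtain ⟨rfl, rfl⟩ := hst
    obtain ⟨rfl, rfl⟩ := huw a (hs' (by simp)) c (ht' (by simp)) (.inl hac)
    have hbd' := h₂ _ (ht' (by simp)) _ (ht' (by simp)) hbd
    have : [b, c, d] <+ m := sublist_of_concat_sublist_concat (l := [b, c]) ht hcd.symm
    exact hm hbd' hw hbc hcd hcd.symm hbc.symm (this.append_right [c])
  · obtain ⟨rfl, rfl, rfl⟩ := hst
    obtain ⟨rfl, rfl⟩ := huw a (hs' (by simp)) c (ht' (by simp)) (.inl hac)
    exact absurd (huw b (hs' (by simp)) d (ht' (by simp)) (.inl hbd)).1 hab.symm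
  · obtain ⟨rfl, rfl, rfl, rfl⟩ := hst
    obtain ⟨rfl, rfl⟩ := huw b (hs' (by simp)) d (ht' (by simp)) (.inl hbd)
    have hac' := h₁ _ (hs' (by simp)) _ (hs' (by simp)) hac
    have : [a, b, c] <+ l := sublist_of_concat_sublist_concat (l := [a, b]) hs hbc.symm
    exact hl hac' hu hab hbc hbc.symm hab.symm (this.append_right [b])
  · obtain ⟨rfl, rfl, rfl, rfl, hst⟩ := hst
    obtain ⟨rfl, rfl⟩ := List.nil_eq_append_iff.1 hst
    exact hl (h₁ _ (hs' (by simp)) _ (hs' (by simp)) hac)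
      (h₁ _ (hs' (by simp)) _ (hs' (by simp)) hbd) hab hbc hcd hda hs

end Lists

/-- A rotation system of a locally finite graph: a list of the neighbours of each vertex, whose
cyclic order stands for the counterclockwise order of the edges around that vertex. -/
structure RotationSystem {V : Type u} (G : SimpleGraph V) where
  nbrs : V → List V
  nodup_nbrs (v : V) : (nbrs v).Nodup
  mem_nbrs {v w : V} : w ∈ nbrs v ↔ G.Adj v w

namespace RotationSystem

variable {V : Type u} {G : SimpleGraph V} (R : RotationSystem G)

/-- `R.Contour X E ℓ` says that `ℓ` lists, in the cyclic order in which a walk around a subtree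
of `G` with vertex set `X` and edge set `E` meets them, all darts (ordered pairs of adjacent
vertices) based in `X`. Trees arise by joining two disjoint trees along an edge. -/
inductive Contour : Set V → Set (Sym2 V) → List (V × V) → Prop
  | single (v : V) : Contour {v} ∅ ((R.nbrs v).map (Prod.mk v))
  | join {X Y : Set V} {E F : Set (Sym2 V)} {u w : V} {B C : List (V × V)} :
      Contour X E ((u, w) :: B) → Contour Y F ((w, u) :: C) → Disjoint X Y →
      Contour (X ∪ Y) (insert s(u, w) (E ∪ F)) ((u, w) :: C ++ (w, u) :: B)
  | rotate {X : Set V} {E : Set (Sym2 V)} {ℓ ℓ' : List (V × V)} :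
      Contour X E ℓ → ℓ ~r ℓ' → Contour X E ℓ'

namespace Contour

variable {R} {X : Set V} {E : Set (Sym2 V)} {ℓ : List (V × V)}

theorem mem_iff (h : R.Contour X E ℓ) {d : V × V} : d ∈ ℓ ↔ d.1 ∈ X ∧ G.Adj d.1 d.2 := by
  induction h with
  | single v =>
    obtain ⟨a, b⟩ := d
    simp only [List.mem_map, Prod.mk.injEq, R.mem_nbrs, mem_singleton_iff]
    grind
  | join _ _ _ ih₁ ih₂ =>
    simp only [List.mem_append, List.mem_cons, mem_union] at ih₁ ih₂ ⊢
    grind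
  | rotate _ hr ih => rw [← hr.mem_iff, ih]

theorem fst_mem (h : R.Contour X E ℓ) {x : V} (hx : x ∈ ℓ.map Prod.fst) : x ∈ X := by
  obtain ⟨d, hd, rfl⟩ := List.mem_map.1 hx
  exact (h.mem_iff.1 hd).1

theorem edge (h : R.Contour X E ℓ) {a b : V} (hab : s(a, b) ∈ E) :
    a ∈ X ∧ b ∈ X ∧ G.Adj a b := by
  induction h with
  | single => exact absurd hab (notMem_empty _)
  | join h₁ h₂ _ ih₁ ih₂ =>
    have hu := h₁.mem_iff.1 List.mem_cons_self
    have hw := h₂.mem_iff.1 List.mem_cons_self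
    simp only [mem_insert_iff, mem_union, Sym2.eq_iff] at hab ⊢
    rcases hab with (⟨rfl, rfl⟩ | ⟨rfl, rfl⟩) | hab | hab
    · exact ⟨.inl hu.1, .inr hw.1, hu.2⟩
    · exact ⟨.inr hw.1, .inl hu.1, hw.2⟩
    · exact ⟨.inl (ih₁ hab).1, .inl (ih₁ hab).2.1, (ih₁ hab).2.2⟩
    · exact ⟨.inr (ih₂ hab).1, .inr (ih₂ hab).2.1, (ih₂ hab).2.2⟩
  | rotate _ _ ih => exact ih hab

theorem nodup (h : R.Contour X E ℓ) : ℓ.Nodup := by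
  induction h with
  | single v => exact (R.nodup_nbrs v).map (Prod.mk_right_injective v)
  | @join _ _ _ _ u w B C h₁ h₂ hd ih₁ ih₂ =>
    have hdis : ((u, w) :: B).Disjoint ((w, u) :: C) := fun d h h' =>
      disjoint_left.1 hd (h₁.mem_iff.1 h).1 (h₂.mem_iff.1 h').1
    have hperm : B ++ (w, u) :: C ~ C ++ (w, u) :: B :=
      List.perm_middle.trans ((List.perm_append_comm.cons _).trans List.perm_middle.symm)
    exact (hperm.cons _).nodup_iff.1 (List.nodup_append'.2 ⟨ih₁, ih₂, hdis⟩)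
  | rotate _ hr ih => exact hr.nodup_iff.1 ih

theorem finite_edges (h : R.Contour X E ℓ) : E.Finite := by
  induction h with
  | single => exact finite_empty
  | join _ _ _ ih₁ ih₂ => exact (ih₁.union ih₂).insert _
  | rotate _ _ ih => exact ih

theorem reachable (h : R.Contour X E ℓ) {p q : V} (hp : p ∈ X) (hq : q ∈ X) :
    (SimpleGraph.fromEdgeSet E).Reachable p q := by
  induction h generalizing p q with
  | single => rw [mem_singleton_iff.1 hp, mem_singleton_iff.1 hq]
  | @join X Y E F u w _ _ h₁ h₂ _ ih₁ ih₂ =>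
    have hu := h₁.mem_iff.1 List.mem_cons_self
    have hw := h₂.mem_iff.1 List.mem_cons_self
    have huw : (SimpleGraph.fromEdgeSet (insert s(u, w) (E ∪ F))).Reachable u w :=
      SimpleGraph.Adj.reachable <| (SimpleGraph.fromEdgeSet_adj _).2 ⟨mem_insert _ _, hu.2.ne⟩
    have toU : ∀ {p}, p ∈ X ∪ Y →
        (SimpleGraph.fromEdgeSet (insert s(u, w) (E ∪ F))).Reachable p u := by
      rintro p (hp | hp)
      · exact (ih₁ hp hu.1).mono <| SimpleGraph.fromEdgeSet_mono fun _ h => .inr (.inl h)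
      · exact ((ih₂ hp hw.1).mono <| SimpleGraph.fromEdgeSet_mono fun _ h => .inr (.inr h)).trans
          huw.symm
    exact (toU hp).trans (toU hq).symm
  | rotate _ _ ih => exact ih hp hq

open Classical in
theorem filter_base (h : R.Contour X E ℓ) {v : V} (hv : v ∈ X) :
    ℓ.filter (·.1 = v) ~r (R.nbrs v).map (Prod.mk v) := by
  have filter_detour : ∀ {u w : V} {B C : List (V × V)}, (∀ d ∈ (w, u) :: C, d.1 ≠ v) →
      ((u, w) :: C ++ (w, u) :: B).filter (·.1 = v) = ((u, w) :: B).filter (·.1 = v) := by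
    intro u w B C hC
    have hC' : C.filter (·.1 = v) = [] := List.filter_eq_nil_iff.2 fun d hd => by
      simpa using hC d (List.mem_cons_of_mem _ hd)
    have hw : w ≠ v := hC _ List.mem_cons_self
    simp [List.filter_cons, hC', hw]
  induction h with
  | single w =>
    obtain rfl := mem_singleton_iff.1 hv
    rw [List.filter_eq_self.2 (by simp)]
  | join h₁ h₂ hd ih₁ ih₂ =>
    rcases hv with hv | hv
    · rw [filter_detour fun d hdC hdv => disjoint_left.1 hd hv (hdv ▸ (h₂.mem_iff.1 hdC).1)]
      exact ih₁ hv
    · refine (isRotated_filter List.isRotated_append _).trans ?_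
      rw [filter_detour fun d hdB hdv => disjoint_left.1 hd (hdv ▸ (h₁.mem_iff.1 hdB).1) hv]
      exact ih₂ hv
  | rotate _ hr ih => exact (isRotated_filter hr.symm _).trans (ih hv)

theorem leaf {u w : V} {B : List (V × V)} {M : List V} (h : R.Contour X E ((u, w) :: B))
    (hw : w ∉ X) (hM : u :: M ~r R.nbrs w) :
    R.Contour (insert w X) (insert s(u, w) E)
      ((u, w) :: M.map (Prod.mk w) ++ (w, u) :: B) := by
  have hsingle : R.Contour {w} ∅ ((w, u) :: M.map (Prod.mk w)) :=
    (Contour.single w).rotate (hM.map (Prod.mk w)).symm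
  simpa only [union_singleton, union_empty] using
    h.join hsingle (disjoint_singleton_right.2 hw)

end Contour

open Classical in
/-- When a walk around the tree with edge set `E` has met the dart `d`, it next meets the
counterclockwise successor of `turn E d`: tree edges are followed to their other end. -/
noncomputable def turn (E : Set (Sym2 V)) (d : V × V) : V × V :=
  if s(d.1, d.2) ∈ E then d.swap else d

theorem turn_of_mem {E : Set (Sym2 V)} {d : V × V} (h : s(d.1, d.2) ∈ E) : turn E d = d.swap :=
  if_pos h

theorem turn_of_notMem {E : Set (Sym2 V)} {d : V × V} (h : s(d.1, d.2) ∉ E) : turn E d = d :=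
  if_neg h

/-- If `Q v a b` relates consecutive neighbours `a`, `b` of every vertex `v`, then
`ContourStep Q E` relates consecutive darts of a contour of a tree with edge set `E`. -/
def ContourStep (Q : V → V → V → Prop) (E : Set (Sym2 V)) (d d' : V × V) : Prop :=
  d'.1 = (turn E d).1 ∧ Q (turn E d).1 (turn E d).2 d'.2

theorem isChain_contourStep_map {Q : V → V → V → Prop} {v a : V} {l : List V}
    (h : List.IsChain (Q v) (a :: l)) :
    List.IsChain (ContourStep Q ∅) ((a :: l).map (Prod.mk v)) := by
  refine (List.isChain_map _).2 (h.imp fun x y hxy => ?_)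
  simpa [ContourStep, turn] using hxy

theorem isChain_contourStep_detour {Q : V → V → V → Prop} {E E' : Set (Sym2 V)} {u w : V}
    {l : List (V × V)} (h : List.IsChain (ContourStep Q E) ((u, w) :: (l ++ [(u, w)])))
    (huw : s(u, w) ∉ E) (huw' : s(u, w) ∈ E')
    (hl : ∀ d ∈ l, (s(d.1, d.2) ∈ E' ↔ s(d.1, d.2) ∈ E)) :
    List.IsChain (ContourStep Q E') ((w, u) :: (l ++ [(u, w)])) := by
  rw [List.isChain_cons] at h ⊢
  refine ⟨fun d hd => ?_, isChain_concat_imp_of_mem h.2 fun x hx d hd => ?_⟩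
  · simpa [ContourStep, turn, huw, huw', Sym2.eq_swap (a := w)] using h.1 d hd
  · have hturn : turn E' x = turn E x := by
      by_cases hE : s(x.1, x.2) ∈ E
      · rw [turn_of_mem hE, turn_of_mem ((hl x hx).2 hE)]
      · rw [turn_of_notMem hE, turn_of_notMem (mt (hl x hx).1 hE)]
    simpa only [ContourStep, hturn] using hd

theorem Contour.mem_join_edges {R : RotationSystem G} {X Y : Set V} {E F : Set (Sym2 V)}
    {u w : V} {B C : List (V × V)} (h₁ : R.Contour X E ((u, w) :: B))
    (h₂ : R.Contour Y F ((w, u) :: C)) (hd : Disjoint X Y) {d : V × V} (hdB : d ∈ B) :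
    s(d.1, d.2) ∈ insert s(u, w) (E ∪ F) ↔ s(d.1, d.2) ∈ E := by
  have hdX : d.1 ∈ X := (h₁.mem_iff.1 (List.mem_cons_of_mem _ hdB)).1
  have hw : w ∈ Y := (h₂.mem_iff.1 List.mem_cons_self).1
  have hdu : s(d.1, d.2) ≠ s(u, w) := by
    rw [Ne, Sym2.eq_iff]
    rintro (⟨h, h'⟩ | ⟨h, -⟩)
    · have hnodup := (List.nodup_cons.1 h₁.nodup).1
      rw [← h, ← h'] at hnodup
      exact hnodup hdB
    · exact disjoint_left.1 hd hdX (h ▸ hw)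
  have hdF : s(d.1, d.2) ∉ F := fun hF => disjoint_left.1 hd hdX (h₂.edge hF).1
  simp [hdu, hdF]

theorem Contour.chain {R : RotationSystem G} {X : Set V} {E : Set (Sym2 V)} {ℓ : List (V × V)}
    (h : R.Contour X E ℓ) {Q : V → V → V → Prop} (hQ : ∀ v, Cycle.Chain (Q v) (R.nbrs v)) :
    Cycle.Chain (ContourStep Q E) (ℓ : Cycle (V × V)) := by
  induction h with
  | single v =>
    specialize hQ v
    cases hv : R.nbrs v with
    | nil => exact Cycle.Chain.nil _
    | cons a l =>
      rw [hv, Cycle.chain_coe_cons] at hQ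
      rw [List.map_cons, Cycle.chain_coe_cons]
      simpa using isChain_contourStep_map hQ
  | @join X Y E F u w B C h₁ h₂ hd ih₁ ih₂ =>
    rw [Cycle.chain_coe_cons] at ih₁ ih₂
    have hu := (h₁.mem_iff.1 List.mem_cons_self).1
    have hw := (h₂.mem_iff.1 List.mem_cons_self).1
    have huF : s(w, u) ∉ F := fun hF => disjoint_left.1 hd hu (h₂.edge hF).2.1
    have hwE : s(u, w) ∉ E := fun hE => disjoint_left.1 hd (h₁.edge hE).2.1 hw
    have hB := isChain_contourStep_detour ih₁ hwE (mem_insert _ (E ∪ F))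
      fun d => h₁.mem_join_edges h₂ hd
    have hC := isChain_contourStep_detour ih₂ huF (mem_insert _ (F ∪ E))
      fun d => h₂.mem_join_edges h₁ hd.symm
    rw [Sym2.eq_swap, union_comm] at hC
    rw [List.cons_append, Cycle.chain_coe_cons]
    simpa using (List.isChain_split (l₁ := (u, w) :: C)).2 ⟨hC, hB⟩
  | rotate _ hr ih => rwa [← Cycle.coe_eq_coe.2 hr]

theorem Contour.noAlternation {R : RotationSystem G} {X : Set V} {E : Set (Sym2 V)}
    {ℓ : List (V × V)} (h : R.Contour X E ℓ) :
    NoAlternation (fun a b => a = b ∨ s(a, b) ∈ E) (ℓ.map Prod.fst) := by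
  have symm {E : Set (Sym2 V)} (a b : V) : a = b ∨ s(a, b) ∈ E → b = a ∨ s(b, a) ∈ E := by
    rw [Sym2.eq_swap, eq_comm]; exact id
  induction h with
  | single v =>
    intro a b c d _ _ hab _ _ _ hs
    have hv := fun x hx => mem_singleton_iff.1 ((single (R := R) v).fst_mem (x := x) hx)
    exact hab ((hv a (hs.subset (by simp))).trans (hv b (hs.subset (by simp))).symm)
  | @join X Y E F u w B C h₁ h₂ hd ih₁ ih₂ =>
    have rotB : ((u, w) :: B).map Prod.fst ~r B.map Prod.fst ++ [u] :=
      List.IsRotated.cons_append_singleton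
    have rotC : ((w, u) :: C).map Prod.fst ~r C.map Prod.fst ++ [w] :=
      List.IsRotated.cons_append_singleton
    have memX : ∀ a ∈ B.map Prod.fst ++ [u], a ∈ X := fun a ha => h₁.fst_mem (rotB.mem_iff.2 ha)
    have memY : ∀ a ∈ C.map Prod.fst ++ [w], a ∈ Y := fun a ha => h₂.fst_mem (rotC.mem_iff.2 ha)
    have hu : u ∈ X := memX u (by simp)
    have hw : w ∈ Y := memY w (by simp)
    have hXY := disjoint_left.1 hd
    have hE : ∀ a b, s(a, b) ∈ E → a ∈ X ∧ b ∈ X := fun a b h =>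
      ⟨(h₁.edge h).1, (h₁.edge h).2.1⟩
    have hF : ∀ a b, s(a, b) ∈ F → a ∈ Y ∧ b ∈ Y := fun a b h =>
      ⟨(h₂.edge h).1, (h₂.edge h).2.1⟩
    have hBC : NoAlternation (fun a b => a = b ∨ s(a, b) ∈ insert s(u, w) (E ∪ F))
        (B.map Prod.fst ++ [u] ++ (C.map Prod.fst ++ [w])) := by
      refine (ih₁.rotate symm rotB).append (ih₂.rotate symm rotC) ?_ ?_ ?_ (.inl rfl) (.inl rfl) <;>
        simp only [mem_insert_iff, mem_union, Sym2.eq_iff] <;> grind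
    refine hBC.rotate symm ?_
    simpa using List.isRotated_append (l := B.map Prod.fst) (l' := u :: (C.map Prod.fst ++ [w]))
  | rotate _ hr ih => exact ih.rotate symm (hr.map _)

end RotationSystem

theorem exists_eq_append_cons_of_cons_sublist {α : Type*} {a : α} {l m : List α}
    (h : a :: l <+ m) : ∃ A B, m = A ++ a :: B ∧ l <+ B := by
  obtain ⟨m₁, m₂, rfl, ha, hl⟩ := List.cons_sublist_iff.1 h
  obtain ⟨A, B, rfl⟩ := List.append_of_mem ha
  exact ⟨A, B ++ m₂, by simp, hl.trans (List.sublist_append_right B m₂)⟩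

theorem eq_add_sum_of_isChain {α M : Type*} [AddCommMonoid M] {J w : α → M} {x y : α}
    {l : List α} (h : List.IsChain (fun a b => J b = J a + w b) (x :: l ++ [y])) :
    J y = J x + ((l ++ [y]).map w).sum := by
  induction l generalizing x with
  | nil => simpa using h
  | cons a l ih =>
    simp only [List.cons_append, List.isChain_cons_cons] at h
    rw [ih h.2, h.1, List.cons_append, List.map_cons, List.sum_cons, add_assoc]

theorem eq_add_of_sublist_of_chain {α M : Type*} [AddCommMonoid M] {J : α → M} {P : α → Prop}
    [DecidablePred P] {c : M} {l : List α} {x y p q : α}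
    (chain : Cycle.Chain (fun a b => J b = J a + if P b then c else 0) (l : Cycle α))
    (hl : l.Nodup) (hs : [x, p, y, q] <+ l) (hp : P p) (hP : ∀ d ∈ l, P d → d = p ∨ d = q) :
    J y = J x + c := by
  obtain ⟨A, B, rfl, hsB⟩ := exists_eq_append_cons_of_cons_sublist hs
  obtain ⟨B, C, rfl, hsC⟩ := exists_eq_append_cons_of_cons_sublist hsB
  obtain ⟨C, D, rfl, hsD⟩ := exists_eq_append_cons_of_cons_sublist hsC
  have hqD : q ∈ D := List.singleton_sublist.1 hsD
  have not_P : ∀ d, d ∈ B ∨ d ∈ C ∨ d = y → ¬ P d := by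
    intro d hd hPd
    have hdpq := hP d (by simp only [List.mem_append, List.mem_cons]; tauto) hPd
    simp only [List.nodup_append, List.nodup_cons, List.mem_append, List.mem_cons] at hl
    clear hsB hsC hsD hs chain
    grind
  have sum_zero {L : List α} (hL : ∀ d ∈ L, d ∈ B ∨ d ∈ C ∨ d = y) :
      (L.map fun d => if P d then c else 0).sum = 0 :=
    List.sum_eq_zero (List.forall_mem_map.2 fun d hd => if_neg (not_P d (hL d hd)))
  rw [Cycle.coe_eq_coe.2 List.isRotated_append, List.cons_append, Cycle.chain_coe_cons] at chain
  have chain' : List.IsChain (fun a b => J b = J a + if P b then c else 0)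
      (x :: (B ++ p :: C) ++ [y]) := chain.prefix ⟨D ++ A ++ [x], by simp⟩
  rw [eq_add_sum_of_isChain chain', List.append_assoc, List.map_append, List.sum_append,
    sum_zero (L := B) (by tauto), List.cons_append, List.map_cons, List.sum_cons,
    sum_zero (L := C ++ [y]) (by simp; tauto), if_pos hp, zero_add, add_zero]

namespace RotationSystem

variable {V : Type u} {G : SimpleGraph V} (R : RotationSystem G)

/-- The boundary of a one-dimensional chain `y` with coefficients in `ZMod 2`. -/
def boundary (y : Sym2 V → ZMod 2) (v : V) : ZMod 2 :=
  ((R.nbrs v).map fun w => y s(v, w)).sum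

theorem boundary_zero : R.boundary 0 = 0 := by
  ext v
  simp [boundary]

theorem boundary_add (y z : Sym2 V → ZMod 2) :
    R.boundary (y + z) = R.boundary y + R.boundary z := by
  ext v
  exact List.sum_map_add

theorem boundary_single [DecidableEq V] {a b : V} (h : G.Adj a b) :
    R.boundary (Pi.single s(a, b) 1) = Pi.single a 1 + Pi.single b 1 := by
  have sum_eq {v w : V} (hvw : G.Adj v w) :
      ((R.nbrs v).map fun x => if x = w then (1 : ZMod 2) else 0).sum = 1 := by
    rw [List.sum_map_ite_eq, List.count_eq_one_of_mem (R.nodup_nbrs v) (R.mem_nbrs.2 hvw)]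
    simp
  ext v
  simp only [boundary, Pi.single_apply, Pi.add_apply, Sym2.eq_iff]
  rcases eq_or_ne v a with rfl | hva
  · simpa [h.ne] using sum_eq h
  · rcases eq_or_ne v b with rfl | hvb
    · simpa [hva] using sum_eq h.symm
    · simp [hva, hvb]

theorem exists_boundary_eq [DecidableEq V] {E : Set (Sym2 V)}
    (hE : ∀ ⦃a b⦄, s(a, b) ∈ E → G.Adj a b) {p q : V}
    (h : (SimpleGraph.fromEdgeSet E).Reachable p q) :
    ∃ y : Sym2 V → ZMod 2, Function.support y ⊆ E ∧
      R.boundary y = Pi.single p 1 + Pi.single q 1 := by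
  obtain ⟨W⟩ := h
  induction W with
  | nil => exact ⟨0, by simp, by rw [boundary_zero, ZModModule.add_self]⟩
  | @cons u v w huv _ ih =>
    obtain ⟨y, hy, hyb⟩ := ih
    have huvE : s(u, v) ∈ E := ((SimpleGraph.fromEdgeSet_adj _).1 huv).1
    refine ⟨Pi.single s(u, v) 1 + y, (Function.support_add _ _).trans (union_subset ?_ hy), ?_⟩
    · exact Pi.support_single_subset.trans (singleton_subset_iff.2 huvE)
    · rw [boundary_add, boundary_single R (hE huvE), hyb, add_assoc, ← add_assoc (Pi.single v 1),
        ZModModule.add_self, zero_add]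

/-- Every finite cycle `z` with coefficients in `ZMod 2` bounds: there is a function on the corners
of the drawing, whose value `I (v, w)` belongs to the corner that follows the dart `(v, w)`
counterclockwise around `v`, that is constant on faces and jumps by `z` across edges. -/
def CyclesBound : Prop :=
  ∀ z : Sym2 V → ZMod 2, (Function.support z).Finite → R.boundary z = 0 →
    ∃ I : V × V → ZMod 2,
      (∀ v, Cycle.Chain (fun a b => I (v, b) = I (v, a) + z s(v, b)) (R.nbrs v)) ∧
        ∀ a b, G.Adj a b → I (b, a) = I (a, b) + z s(a, b)

/-- Edges that do not belong to a finite subtree do not alternate along its contours. -/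
def Noncrossing : Prop :=
  ∀ ⦃X : Set V⦄ ⦃E : Set (Sym2 V)⦄ ⦃ℓ : List (V × V)⦄, R.Contour X E ℓ →
    ∀ ⦃a b p q : V⦄, s(a, b) ∉ E → s(p, q) ∉ E → s(a, b) ≠ s(p, q) →
      ¬ [(a, b), (p, q), (b, a), (q, p)] <+ ℓ

variable {R}

open Classical in
theorem Contour.exists_potential {X : Set V} {E : Set (Sym2 V)} {ℓ : List (V × V)}
    (hR : R.CyclesBound) (h : R.Contour X E ℓ) {p q : V} (hp : p ∈ X) (hq : q ∈ X)
    (hpq : G.Adj p q) (hpqE : s(p, q) ∉ E) :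
    ∃ J : V × V → ZMod 2,
      (∀ a b, G.Adj a b → s(a, b) ∉ E → s(a, b) ≠ s(p, q) → J (b, a) = J (a, b)) ∧
      Cycle.Chain (fun d d' => J d' = J d + if s(d'.1, d'.2) = s(p, q) then 1 else 0)
        (ℓ : Cycle (V × V)) := by
  obtain ⟨y, hyE, hy⟩ := R.exists_boundary_eq (fun a b hab => (h.edge hab).2.2) (h.reachable hp hq)
  have hy0 : ∀ e ∉ E, y e = 0 := fun e he => Function.notMem_support.1 (mt (@hyE e) he)
  obtain ⟨I, hI, hI'⟩ := hR (y + Pi.single s(p, q) 1)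
    (((h.finite_edges.subset hyE).union ((finite_singleton _).subset
      Pi.support_single_subset)).subset (Function.support_add _ _))
    (by rw [boundary_add, hy, boundary_single R hpq, ZModModule.add_self])
  refine ⟨fun d => I (turn E d), fun a b hab habE habpq => ?_, ?_⟩
  · have hbaE : s(b, a) ∉ E := Sym2.eq_swap (a := a) ▸ habE
    dsimp only
    rw [turn_of_notMem (d := (a, b)) habE, turn_of_notMem (d := (b, a)) hbaE, hI' a b hab]
    simp [hy0 _ habE, habpq]
  · refine (h.chain hI).imp fun d ⟨v, w⟩ ⟨hv, hw⟩ => ?_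
    dsimp only at hv hw ⊢
    obtain rfl : v = (turn E d).1 := hv
    by_cases hE : s((turn E d).1, w) ∈ E
    · have hne : s((turn E d).1, w) ≠ s(p, q) := fun h => hpqE (h ▸ hE)
      rw [turn_of_mem (d := (_, w)) hE, Prod.swap_prod_mk, hI' _ _ (h.edge hE).2.2, hw]
      simp [hne, add_assoc, ZModModule.add_self]
    · rw [turn_of_notMem (d := (_, w)) hE, hw]
      simp [hy0 _ hE, Pi.single_apply]

theorem CyclesBound.noncrossing (hR : R.CyclesBound) : R.Noncrossing := by
  classical
  intro X E ℓ h a b p q habE hpqE hne hs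
  have mem : ∀ {v w}, (v, w) ∈ [(a, b), (p, q), (b, a), (q, p)] → v ∈ X ∧ G.Adj v w :=
    fun hd => h.mem_iff.1 (hs.subset hd)
  have hp : p ∈ X ∧ G.Adj p q := mem (by simp)
  have hq : q ∈ X ∧ G.Adj q p := mem (by simp)
  have hab : a ∈ X ∧ G.Adj a b := mem (by simp)
  obtain ⟨J, hJ, chain⟩ := h.exists_potential hR hp.1 hq.1 hp.2 hpqE
  have jump : J (b, a) = J (a, b) + 1 := by
    refine eq_add_of_sublist_of_chain chain h.nodup hs rfl fun d _ hd => ?_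
    simpa [Prod.ext_iff, Sym2.eq_iff] using hd
  rw [hJ a b hab.2 habE hne] at jump
  simp at jump

theorem Contour.exists_insert {X : Set V} {E : Set (Sym2 V)} {ℓ : List (V × V)}
    (h : R.Contour X E ℓ) {u w : V} (hu : u ∈ X) (hw : w ∉ X) (huw : G.Adj u w) :
    ∃ ℓ', R.Contour (insert w X) (insert s(u, w) E) ℓ' := by
  obtain ⟨B, hB⟩ := exists_isRotated_cons (h.mem_iff (d := (u, w)).2 ⟨hu, huw⟩)
  obtain ⟨M, hM⟩ := exists_isRotated_cons (R.mem_nbrs.2 huw.symm)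
  exact ⟨_, (h.rotate hB).leaf hw hM.symm⟩

theorem Contour.exists_extension {X S : Set V} {E A : Set (Sym2 V)} {ℓ : List (V × V)}
    (h : R.Contour X E ℓ) (hS : S.Finite) (hXS : X ⊆ S)
    (hA : ∀ Y, X ⊆ Y → Y ⊂ S → ∃ u ∈ Y, ∃ w ∈ S \ Y, G.Adj u w ∧ s(u, w) ∈ A) :
    ∃ E' ⊆ E ∪ A, ∃ ℓ', R.Contour S E' ℓ' := by
  induction hn : (S \ X).ncard generalizing X E ℓ with
  | zero =>
    obtain rfl : X = S :=
      hXS.antisymm (sdiff_eq_empty.1 ((ncard_eq_zero (hS.subset sdiff_subset)).1 hn))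
    exact ⟨E, subset_union_left, ℓ, h⟩
  | succ n ih =>
    have hne : X ≠ S := by
      rintro rfl
      simp at hn
    obtain ⟨u, hu, w, ⟨hwS, hwX⟩, huw, hAuw⟩ := hA X subset_rfl (hXS.ssubset_of_ne hne)
    obtain ⟨ℓ₁, h₁⟩ := h.exists_insert hu hwX huw
    have hcard : (S \ insert w X).ncard = n := by
      have hw : w ∈ S \ X := ⟨hwS, hwX⟩
      rw [show S \ insert w X = (S \ X) \ {w} by grind, ncard_sdiff_singleton_of_mem hw, hn,
        Nat.add_sub_cancel]
    obtain ⟨E', hE', h'⟩ := ih h₁ (insert_subset hwS hXS)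
      (fun Y hY => hA Y ((subset_insert _ _).trans hY)) hcard
    exact ⟨E', by grind, h'⟩

end RotationSystem

/-- The square lattice. -/
noncomputable abbrev latticeGraph : SimpleGraph (ℤ × ℤ) :=
  SimpleGraph.hasse ℤ □ SimpleGraph.hasse ℤ

theorem latticeGraph_adj {a b : ℤ} {q : ℤ × ℤ} : latticeGraph.Adj (a, b) q ↔
    q = (a + 1, b) ∨ q = (a, b + 1) ∨ q = (a - 1, b) ∨ q = (a, b - 1) := by
  obtain ⟨c, d⟩ := q
  simp only [SimpleGraph.boxProd_adj, SimpleGraph.hasse_adj, Order.covBy_iff_add_one_eq,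
    Prod.mk.injEq]
  omega

/-- The counterclockwise order of the four neighbours of each point of the square lattice. -/
def latticeRotation : RotationSystem latticeGraph where
  nbrs p := [(p.1 + 1, p.2), (p.1, p.2 + 1), (p.1 - 1, p.2), (p.1, p.2 - 1)]
  nodup_nbrs p := by
    simp only [List.nodup_cons, List.mem_cons, Prod.mk.injEq, List.not_mem_nil, List.nodup_nil]
    grind
  mem_nbrs {p q} := by simp [← latticeGraph_adj]

theorem exists_cell_potential {M : Type*} [AddCommGroup M] {right up : ℤ → ℤ → M} {m : ℤ}
    (hright : ∀ a < m, ∀ b, right a b = 0) (hup : ∀ a < m, ∀ b, up a b = 0)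
    (hcycle : ∀ a b, right a b + up a (b - 1) = right (a - 1) b + up a b) :
    ∃ J : ℤ → ℤ → M, ∀ a b, J a b = J (a - 1) b + up a b ∧ J a b = J a (b - 1) + right a b := by
  let J a b := ∑ c ∈ Finset.Icc m a, up c b
  have J_eq_zero : ∀ a < m, ∀ b, J a b = 0 := fun a ha b => by
    simp [J, Finset.Icc_eq_empty (by omega : ¬ m ≤ a)]
  have J_sub_one (a b : ℤ) : J a b = J (a - 1) b + up a b := by
    rcases lt_or_ge a m with ha | ha
    · rw [J_eq_zero a ha, J_eq_zero _ (by omega), hup a ha, add_zero]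
    · have : Finset.Icc m a = insert a (Finset.Icc m (a - 1)) := by
        ext x
        simp only [Finset.mem_Icc, Finset.mem_insert]
        omega
      simp only [J]
      rw [this, Finset.sum_insert (by simp), add_comm]
  refine ⟨J, fun a b => ⟨J_sub_one a b, ?_⟩⟩
  rcases lt_or_ge a m with ha | ha
  · rw [J_eq_zero a ha, J_eq_zero a ha, hright a ha, add_zero]
  · replace ha : m - 1 ≤ a := by omega
    induction a, ha using Int.leInduction with
    | base => rw [J_eq_zero _ (by omega), J_eq_zero _ (by omega), hright _ (by omega), add_zero]
    | succ a _ ih =>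
      have hc := hcycle (a + 1) b
      rw [J_sub_one (a + 1) b, J_sub_one (a + 1) (b - 1)]
      simp only [add_sub_cancel_right] at hc ⊢
      rw [ih, add_assoc, add_assoc, ← hc, add_comm (right _ _)]

/-- The lower left corner of the cell that follows the dart `(p, q)` counterclockwise around `p`. -/
def leftCell (p q : ℤ × ℤ) : ℤ × ℤ :=
  (if q.1 < p.1 ∨ p.2 < q.2 then p.1 - 1 else p.1, if q.2 < p.2 ∨ q.1 < p.1 then p.2 - 1 else p.2)

theorem latticeRotation_cyclesBound : latticeRotation.CyclesBound := by
  intro z hz hb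
  obtain ⟨m, hm⟩ : ∃ m : ℤ, ∀ a < m, ∀ b q, z s((a, b), q) = 0 := by
    obtain ⟨m, hm⟩ := (hz.image fun e => (e.map Prod.fst).inf).bddBelow
    refine ⟨m, fun a ha b q => by_contra fun h => ?_⟩
    have := hm ⟨s((a, b), q), h, rfl⟩
    grind [Sym2.map_mk, Sym2.inf_mk]
  let right a b := z s((a, b), (a + 1, b))
  let up a b := z s((a, b), (a, b + 1))
  have hright (a b : ℤ) : z s((a, b), (a + 1, b)) = right a b := rfl
  have hup (a b : ℤ) : z s((a, b), (a, b + 1)) = up a b := rfl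
  have hleft (a b : ℤ) : z s((a, b), (a - 1, b)) = right (a - 1) b := by
    simp [right, Sym2.eq_swap]
  have hdown (a b : ℤ) : z s((a, b), (a, b - 1)) = up a (b - 1) := by
    simp [up, Sym2.eq_swap]
  have hright₀ : ∀ a < m, ∀ b, right a b = 0 := fun a ha b => hm a ha b _
  have hup₀ : ∀ a < m, ∀ b, up a b = 0 := fun a ha b => hm a ha b _
  clear_value right up
  have hcycle (a b : ℤ) : right a b + up a (b - 1) = right (a - 1) b + up a b := by
    have := congrFun hb (a, b)
    simp only [RotationSystem.boundary, latticeRotation, List.map_cons, List.map_nil, List.sum_cons,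
      List.sum_nil, hleft, hdown, hright, hup, Pi.zero_apply] at this
    grind
  obtain ⟨J, hJ⟩ := exists_cell_potential hright₀ hup₀ hcycle
  refine ⟨fun d => J (leftCell d.1 d.2).1 (leftCell d.1 d.2).2, ?_, ?_⟩
  · rintro ⟨a, b⟩
    have h₁ := hJ a b
    have h₂ := hJ (a - 1) b
    have h₃ := hJ a (b - 1)
    simp only [latticeRotation, Cycle.chain_coe_cons, List.cons_append, List.nil_append,
      List.isChain_cons_cons, List.IsChain.singleton, hleft, hdown, hright, hup]
    grind [leftCell]
  · rintro ⟨a, b⟩ q h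
    have h₁ := hJ a b
    have h₂ := hJ (a - 1) b
    have h₃ := hJ a (b - 1)
    rcases latticeGraph_adj.1 h with rfl | rfl | rfl | rfl <;>
      simp only [hleft, hdown, hright, hup] <;> grind [leftCell]

/-- A model of `G` as a minor of `H`, with finite branch sets. -/
structure MinorModel {V : Type u} {W : Type*} (G : SimpleGraph V) (H : SimpleGraph W) where
  branch : V → Set W
  finite_branch (v : V) : (branch v).Finite
  connected_branch (v : V) : (H.induce (branch v)).Connected
  eq_of_mem_branch {u v : V} {x : W} : x ∈ branch u → x ∈ branch v → u = v
  exists_adj {u v : V} : G.Adj u v → ∃ x ∈ branch u, ∃ y ∈ branch v, H.Adj x y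

theorem exists_isRotated_filterMap_eq {α β : Type*} {f : α → Option β} {c : List α} {l : List β}
    (h : c.filterMap f ~r l) : ∃ c', c ~r c' ∧ c'.filterMap f = l := by
  obtain ⟨n, hn, rfl⟩ := List.isRotated_iff_mod.1 h
  obtain ⟨c₁, c₂, rfl, h₁, h₂⟩ :=
    List.filterMap_eq_append_iff.1 (List.take_append_drop n (c.filterMap f)).symm
  refine ⟨c₂ ++ c₁, List.isRotated_append, ?_⟩
  rw [List.rotate_eq_drop_append_take hn, List.filterMap_append, h₁, h₂]

theorem map_filterMap_sublist {α β : Type*} {f : α → Option β} {g : β → α}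
    (h : ∀ a b, f a = some b → g b = a) (l : List α) : (l.filterMap f).map g <+ l := by
  induction l with
  | nil => exact .refl _
  | cons a l ih =>
    cases hfa : f a with
    | none => rw [List.filterMap_cons_none hfa]; exact ih.cons a
    | some b => rw [List.filterMap_cons_some hfa, List.map_cons, h a b hfa]; exact ih.cons_cons a

theorem exists_adj_of_ssubset {W : Type*} {H : SimpleGraph W} {S Y : Set W}
    (hS : (H.induce S).Preconnected) (hY : Y.Nonempty) (hYS : Y ⊂ S) :
    ∃ x ∈ Y, ∃ y ∈ S \ Y, H.Adj x y := by
  obtain ⟨x, hx⟩ := hY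
  obtain ⟨y, hyS, hyY⟩ := exists_of_ssubset hYS
  obtain ⟨p⟩ := hS ⟨x, hYS.subset hx⟩ ⟨y, hyS⟩
  obtain ⟨d, -, hd₁, hd₂⟩ := p.exists_boundary_dart (Subtype.val ⁻¹' Y) hx hyY
  exact ⟨d.fst, hd₁, d.snd, ⟨d.snd.2, hd₂⟩, d.adj⟩

theorem RotationSystem.exists_contour {W : Type*} {H : SimpleGraph W} (R : RotationSystem H)
    {S : Set W} (hS : S.Finite) (hconn : (H.induce S).Connected) : ∃ E ℓ, R.Contour S E ℓ := by
  obtain ⟨⟨x, hx⟩⟩ := hconn.nonempty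
  obtain ⟨E, -, h⟩ := (RotationSystem.Contour.single (R := R) x).exists_extension hS
    (singleton_subset_iff.2 hx) (A := univ) fun Y hY hYS => by
      simpa using exists_adj_of_ssubset hconn.preconnected (singleton_nonempty x |>.mono hY) hYS
  exact ⟨E, h⟩

namespace MinorModel

variable {V : Type u} {W : Type*} {G : SimpleGraph V} {H : SimpleGraph W} (M : MinorModel G H)

/-- A choice of one edge of `H` for every edge of `G`, presented as the partial map that takes the
two darts of each chosen edge to the corresponding darts of `G`. -/
structure DartMap where
  toFun : W × W → Option (V × V)
  adj {d D} : toFun d = some D → H.Adj d.1 d.2 ∧ G.Adj D.1 D.2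
  fst_mem {d D} : toFun d = some D → d.1 ∈ M.branch D.1
  swap {d D} : toFun d = some D → toFun d.swap = some D.swap
  inj {d d' D} : toFun d = some D → toFun d' = some D → d = d'
  exists_eq {D} : G.Adj D.1 D.2 → ∃ d, toFun d = some D

theorem exists_chosen_edges : ∃ f : Sym2 V → Sym2 W, ∀ u v, G.Adj u v →
    ∃ x ∈ M.branch u, ∃ y ∈ M.branch v, H.Adj x y ∧ f s(u, v) = s(x, y) := by
  have key : ∀ e : Sym2 V, ∃ e' : Sym2 W, ∀ u v, G.Adj u v → e = s(u, v) →
      ∃ x ∈ M.branch u, ∃ y ∈ M.branch v, H.Adj x y ∧ e' = s(x, y) := by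
    intro e
    induction e with | _ u v
    by_cases h : G.Adj u v
    · obtain ⟨x, hx, y, hy, hxy⟩ := M.exists_adj h
      refine ⟨s(x, y), fun u' v' h' he => ?_⟩
      rcases Sym2.eq_iff.1 he with ⟨rfl, rfl⟩ | ⟨rfl, rfl⟩
      · exact ⟨x, hx, y, hy, hxy, rfl⟩
      · exact ⟨y, hy, x, hx, hxy.symm, Sym2.eq_swap⟩
    · obtain ⟨⟨x, -⟩⟩ := (M.connected_branch u).nonempty
      refine ⟨s(x, x), fun u' v' h' he => absurd ?_ h⟩
      rwa [← SimpleGraph.mem_edgeSet, he]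
  choose f hf using key
  exact ⟨f, fun u v h => hf _ u v h rfl⟩

theorem nonempty_dartMap : Nonempty M.DartMap := by
  classical
  obtain ⟨f, hf⟩ := M.exists_chosen_edges
  let Lies (d : W × W) (D : V × V) : Prop :=
    d.1 ∈ M.branch D.1 ∧ d.2 ∈ M.branch D.2 ∧ G.Adj D.1 D.2 ∧ f s(D.1, D.2) = s(d.1, d.2)
  let F (d : W × W) : Option (V × V) := if h : ∃ D, Lies d D then some h.choose else none
  have F_eq {d D} : F d = some D ↔ Lies d D := by
    constructor
    · intro h
      obtain ⟨hex, hD⟩ : ∃ h : ∃ D, Lies d D, h.choose = D := by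
        simpa [F] using h
      exact hD ▸ hex.choose_spec
    · intro h
      have hex : ∃ D, Lies d D := ⟨D, h⟩
      have heq : hex.choose = D := Prod.ext
        (M.eq_of_mem_branch hex.choose_spec.1 h.1) (M.eq_of_mem_branch hex.choose_spec.2.1 h.2.1)
      simp only [F, dif_pos hex, heq]
  refine ⟨⟨F, fun {d D} h => ?_, fun h => (F_eq.1 h).1, fun {d D} h => ?_, fun {d d' D} h h' => ?_,
    fun {D} h => ?_⟩⟩
  · obtain ⟨-, -, hD, hfD⟩ := F_eq.1 h
    obtain ⟨x, -, y, -, hxy, hf'⟩ := hf _ _ hD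
    refine ⟨?_, hD⟩
    rwa [← SimpleGraph.mem_edgeSet, ← hfD, hf']
  · obtain ⟨h₁, h₂, hD, hfD⟩ := F_eq.1 h
    exact F_eq.2 ⟨h₂, h₁, hD.symm, by simpa [Sym2.eq_swap] using hfD⟩
  · obtain ⟨h₁, -, hD, hfD⟩ := F_eq.1 h
    obtain ⟨-, h₂', -, hfD'⟩ := F_eq.1 h'
    rcases Sym2.eq_iff.1 (hfD.symm.trans hfD') with h | h
    · exact Prod.ext h.1 h.2
    · exact absurd (M.eq_of_mem_branch h₁ (h.1 ▸ h₂')) hD.ne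
  · obtain ⟨x, hx, y, hy, -, hfD⟩ := hf _ _ h
    exact ⟨(x, y), F_eq.2 ⟨hx, hy, h, hfD⟩⟩

namespace DartMap

variable {M} (φ : M.DartMap) {R : RotationSystem H}

theorem mem_filterMap_iff {v : V} {E : Set (Sym2 W)} {ℓ : List (W × W)}
    (h : R.Contour (M.branch v) E ℓ) {D : V × V} :
    D ∈ ℓ.filterMap φ.toFun ↔ D.1 = v ∧ G.Adj D.1 D.2 := by
  rw [List.mem_filterMap]
  constructor
  · rintro ⟨d, hd, hD⟩
    exact ⟨M.eq_of_mem_branch (φ.fst_mem hD) (h.mem_iff.1 hd).1, (φ.adj hD).2⟩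
  · rintro ⟨rfl, hD⟩
    obtain ⟨d, hd⟩ := φ.exists_eq hD
    exact ⟨d, h.mem_iff.2 ⟨φ.fst_mem hd, (φ.adj hd).1⟩, hd⟩

theorem exists_rotationSystem (R : RotationSystem H) : ∃ R' : RotationSystem G, ∀ v, ∃ E ℓ,
    R.Contour (M.branch v) E ℓ ∧ ℓ.filterMap φ.toFun = (R'.nbrs v).map (Prod.mk v) := by
  choose E L hL using fun v => R.exists_contour (M.finite_branch v) (M.connected_branch v)
  have hmap (v : V) : (((L v).filterMap φ.toFun).map Prod.snd).map (Prod.mk v) =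
      (L v).filterMap φ.toFun := by
    rw [List.map_map, List.map_congr_left fun D hD => ?_, List.map_id]
    exact Prod.ext ((φ.mem_filterMap_iff (hL v)).1 hD).1.symm rfl
  refine ⟨⟨fun v => ((L v).filterMap φ.toFun).map Prod.snd, fun v => ?_, fun {v w} => ?_⟩,
    fun v => ⟨E v, L v, hL v, (hmap v).symm⟩⟩
  · refine List.Nodup.of_map (Prod.mk v) ?_
    rw [hmap]
    exact (hL v).nodup.filterMap fun d d' D hd hd' => φ.inj hd hd'
  · rw [← List.mem_map_of_injective (Prod.mk_right_injective v), hmap,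
      φ.mem_filterMap_iff (hL v)]
    simp

theorem exists_lift {R' : RotationSystem G} (hR' : ∀ v, ∃ E ℓ,
    R.Contour (M.branch v) E ℓ ∧ ℓ.filterMap φ.toFun = (R'.nbrs v).map (Prod.mk v))
    {X : Set V} {E : Set (Sym2 V)} {ℓ : List (V × V)} (h : R'.Contour X E ℓ) :
    ∃ E' ℓ', R.Contour (⋃ v ∈ X, M.branch v) E' ℓ' ∧ ℓ'.filterMap φ.toFun = ℓ ∧
      ∀ {d D}, φ.toFun d = some D → s(d.1, d.2) ∈ E' → s(D.1, D.2) ∈ E := by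
  induction h with
  | single v =>
    obtain ⟨E, ℓ, h, hℓ⟩ := hR' v
    refine ⟨E, ℓ, by simpa using h, hℓ, fun {d D} hd hE => ?_⟩
    have h₁ := M.eq_of_mem_branch (φ.fst_mem hd) (h.edge hE).1
    have h₂ := M.eq_of_mem_branch (φ.fst_mem (φ.swap hd)) (h.edge hE).2.1
    exact absurd (h₁.trans h₂.symm) (φ.adj hd).2.ne
  | @join X Y E F u w B C _ _ hd ih₁ ih₂ =>
    obtain ⟨E₁, ℓ₁, h₁, hB, hE₁⟩ := ih₁
    obtain ⟨E₂, ℓ₂, h₂, hC, hE₂⟩ := ih₂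
    obtain ⟨a₁, ⟨x, y⟩, b₁, rfl, ha₁, hd₁, hb₁⟩ := List.filterMap_eq_cons_iff.1 hB
    obtain ⟨a₂, d', b₂, rfl, ha₂, hd₂, hb₂⟩ := List.filterMap_eq_cons_iff.1 hC
    obtain rfl : d' = (y, x) := φ.inj hd₂ (φ.swap hd₁)
    have hdisj : Disjoint (⋃ v ∈ X, M.branch v) (⋃ v ∈ Y, M.branch v) := by
      simp only [disjoint_iUnion_left, disjoint_iUnion_right]
      exact fun y hy x hx => disjoint_left.2 fun z hz hz' =>
        disjoint_left.1 hd hx (M.eq_of_mem_branch hz hz' ▸ hy)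
    have hjoin := (h₁.rotate List.isRotated_append).join (h₂.rotate List.isRotated_append) hdisj
    rw [← biUnion_union] at hjoin
    refine ⟨_, _, hjoin, ?_, fun {d D} hd hE => ?_⟩
    · simp only [List.append_eq, List.filterMap_append, List.filterMap_cons_some hd₁,
        List.filterMap_cons_some hd₂, List.filterMap_eq_nil_iff.2 ha₁,
        List.filterMap_eq_nil_iff.2 ha₂, hb₁, hb₂, List.append_nil]
    · rcases hE with hE | hE | hE
      · left
        rcases Sym2.eq_iff.1 hE with h | h
        · obtain rfl : d = (x, y) := Prod.ext h.1 h.2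
          rw [Option.some.inj (hd.symm.trans hd₁)]
        · obtain rfl : d = (y, x) := Prod.ext h.1 h.2
          rw [Option.some.inj (hd.symm.trans hd₂), Sym2.eq_swap]
      · exact .inr (.inl (hE₁ hd hE))
      · exact .inr (.inr (hE₂ hd hE))
  | rotate _ hr ih =>
    obtain ⟨E', ℓ', h, rfl, hE⟩ := ih
    obtain ⟨ℓ'', hr', rfl⟩ := exists_isRotated_filterMap_eq hr
    exact ⟨E', ℓ'', h.rotate hr', rfl, hE⟩

end DartMap

theorem exists_noncrossing (M : MinorModel G H) {R : RotationSystem H} (hR : R.Noncrossing) :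
    ∃ R' : RotationSystem G, R'.Noncrossing := by
  obtain ⟨φ⟩ := M.nonempty_dartMap
  obtain ⟨R', hR'⟩ := φ.exists_rotationSystem R
  refine ⟨R', fun X E ℓ h a b p q hab hpq hne hs => ?_⟩
  obtain ⟨E', ℓ', h', rfl, hE'⟩ := φ.exists_lift hR' h
  obtain ⟨d, -, hda⟩ := List.mem_filterMap.1 (hs.subset (by simp) : (a, b) ∈ _)
  obtain ⟨d', -, hdp⟩ := List.mem_filterMap.1 (hs.subset (by simp) : (p, q) ∈ _)
  have hinv (D : V × V) : ∃ x, ∀ y, φ.toFun y = some D → x = y := by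
    by_cases h : ∃ x, φ.toFun x = some D
    · obtain ⟨x, hx⟩ := h
      exact ⟨x, fun y => φ.inj hx⟩
    · exact ⟨d, fun y hy => absurd ⟨y, hy⟩ h⟩
  choose g hg using hinv
  have hs' := (hs.map g).trans (map_filterMap_sublist (fun y D => hg D y) ℓ')
  simp only [List.map_cons, List.map_nil, hg _ d hda, hg _ d' hdp,
    hg (b, a) _ (φ.swap hda), hg (q, p) _ (φ.swap hdp)] at hs'
  refine hR h' (fun h => hab (hE' hda h)) (fun h => hpq (hE' hdp h)) (fun h => hne ?_) hs'
  rcases Sym2.eq_iff.1 h with h | h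
  · obtain rfl : d = d' := Prod.ext h.1 h.2
    obtain ⟨rfl, rfl⟩ := Prod.mk.inj (Option.some.inj (hda.symm.trans hdp))
    rfl
  · obtain rfl : d = d'.swap := Prod.ext h.1 h.2
    obtain ⟨rfl, rfl⟩ := Prod.mk.inj (Option.some.inj (hda.symm.trans (φ.swap hdp)))
    exact Sym2.eq_swap

end MinorModel

/-- A family of sets satisfying `P`, one for every vertex and one for every edge of `G`, that
intersect only if they belong to an edge and one of its ends, and do intersect in this case. -/
structure OverlapModel {V : Type u} {W : Type*} (G : SimpleGraph V) (P : Set W → Prop) where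
  vertex : V → Set W
  edge : Sym2 V → Set W
  vertex_spec (v : V) : P (vertex v)
  edge_spec {e : Sym2 V} : e ∈ G.edgeSet → P (edge e)
  inter_nonempty {e : Sym2 V} {v : V} : e ∈ G.edgeSet → v ∈ e → (vertex v ∩ edge e).Nonempty
  disjoint_vertex {u v : V} : u ≠ v → Disjoint (vertex u) (vertex v)
  disjoint_edge_vertex {e : Sym2 V} {v : V} : e ∈ G.edgeSet → v ∉ e →
    Disjoint (edge e) (vertex v)
  disjoint_edge {e e' : Sym2 V} : e ∈ G.edgeSet → e' ∈ G.edgeSet → e ≠ e' →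
    Disjoint (edge e) (edge e')

theorem exists_connected_adj {W : Type*} {H : SimpleGraph W} {S B : Set W} {p : W}
    (hS : S.Finite) (hconn : (H.induce S).Preconnected) (hpS : p ∈ S) (hpB : p ∉ B)
    (hSB : (B ∩ S).Nonempty) :
    ∃ Y ⊆ S \ B, p ∈ Y ∧ (H.induce Y).Connected ∧ ∃ x ∈ Y, ∃ y ∈ B, H.Adj x y := by
  have hfin : {Y | Y ⊆ S \ B ∧ p ∈ Y ∧ (H.induce Y).Connected}.Finite :=
    hS.finite_subsets.subset fun Y hY => hY.1.trans sdiff_subset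
  have hp : (H.induce {p}).Connected := by
    have : Subsingleton ({p} : Set W) := (subsingleton_coe _).2 subsingleton_singleton
    exact SimpleGraph.connected_iff _ |>.2 ⟨.of_subsingleton, ⟨p, rfl⟩⟩
  obtain ⟨Y, ⟨hYS, hpY, hY⟩, hmax⟩ := hfin.exists_maximal
    ⟨{p}, singleton_subset_iff.2 ⟨hpS, hpB⟩, rfl, hp⟩
  obtain ⟨q, hqB, hqS⟩ := hSB
  have hss : Y ⊂ S := ssubset_iff_exists.2
    ⟨hYS.trans sdiff_subset, q, hqS, fun hq => (hYS hq).2 hqB⟩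
  obtain ⟨x, hx, y, ⟨hyS, hyY⟩, hxy⟩ := exists_adj_of_ssubset hconn ⟨p, hpY⟩ hss
  refine ⟨Y, hYS, hpY, hY, x, hx, y, by_contra fun hyB => hyY ?_, hxy⟩
  have hxyY : (H.induce (Y ∪ {x, y})).Connected :=
    SimpleGraph.induce_union_connected hY.preconnected
      (SimpleGraph.induce_pair_connected_of_adj hxy).preconnected ⟨x, hx, by simp⟩
  have hsub : Y ∪ {x, y} ⊆ S \ B :=
    union_subset hYS (insert_subset (hYS hx) (singleton_subset_iff.2 ⟨hyS, hyB⟩))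
  exact hmax ⟨hsub, .inl hpY, hxyY⟩ subset_union_left (.inr (.inr rfl))

theorem connected_induce_union_biUnion {W ι : Type*} {H : SimpleGraph W} {K : Set W} {t : Set ι}
    {Y : ι → Set W} (hK : (H.induce K).Connected)
    (hY : ∀ i ∈ t, (H.induce (Y i)).Connected ∧ (K ∩ Y i).Nonempty) :
    (H.induce (K ∪ ⋃ i ∈ t, Y i)).Connected := by
  obtain ⟨⟨p, hp⟩⟩ := hK.nonempty
  have hsub {i : ι} (hi : i ∈ t) : K ∪ Y i ⊆ K ∪ ⋃ i ∈ t, Y i :=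
    union_subset_union_right K (subset_biUnion_of_mem hi)
  refine SimpleGraph.induce_connected_of_patches p (.inl hp) fun {v} hv => ?_
  rcases hv with hv | hv
  · exact ⟨K, subset_union_left, hp, hv, hK.preconnected _ _⟩
  · obtain ⟨i, hi, hv⟩ := mem_iUnion₂.1 hv
    exact ⟨K ∪ Y i, hsub hi, .inl hp, .inr hv, (SimpleGraph.induce_union_connected
      hK.preconnected (hY i hi).1.preconnected (hY i hi).2).preconnected _ _⟩

namespace OverlapModel

variable {V : Type u} {W : Type*} {G : SimpleGraph V} {H : SimpleGraph W}

theorem exists_arms (M : OverlapModel G fun S => S.Finite ∧ (H.induce S).Connected)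
    {tail head : Sym2 V → V} (hG : ∀ e, e = s(tail e, head e)) :
    ∃ Y : Sym2 V → Set W, ∀ e ∈ G.edgeSet, Y e ⊆ M.edge e \ M.vertex (head e) ∧
      (M.vertex (tail e) ∩ Y e).Nonempty ∧ (H.induce (Y e)).Connected ∧
      ∃ x ∈ Y e, ∃ y ∈ M.vertex (head e), H.Adj x y := by
  have key (e : Sym2 V) : ∃ Y, e ∈ G.edgeSet → Y ⊆ M.edge e \ M.vertex (head e) ∧
      (M.vertex (tail e) ∩ Y).Nonempty ∧ (H.induce Y).Connected ∧
      ∃ x ∈ Y, ∃ y ∈ M.vertex (head e), H.Adj x y := by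
    by_cases he : e ∈ G.edgeSet
    · have hadj : G.Adj (tail e) (head e) := by rwa [← SimpleGraph.mem_edgeSet, ← hG e]
      obtain ⟨p, hpK, hpM⟩ := M.inter_nonempty he (Sym2.mem_iff_exists.2 ⟨_, hG e⟩)
      obtain ⟨Y, hY, hpY, hconn, hend⟩ := exists_connected_adj (M.edge_spec he).1
        (M.edge_spec he).2.preconnected hpM (disjoint_left.1 (M.disjoint_vertex hadj.ne) hpK)
        (M.inter_nonempty he (Sym2.mem_iff_exists.2 ⟨_, (hG e).trans Sym2.eq_swap⟩))
      exact ⟨Y, fun _ => ⟨hY, ⟨p, hpK, hpY⟩, hconn, hend⟩⟩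
    · exact ⟨∅, fun h => absurd h he⟩
  choose Y hY using key
  exact ⟨Y, hY⟩

theorem nonempty_minorModel [Finite V]
    (M : OverlapModel G fun S => S.Finite ∧ (H.induce S).Connected) :
    Nonempty (MinorModel G H) := by
  obtain ⟨tail, head, hG⟩ : ∃ tail head : Sym2 V → V, ∀ e, e = s(tail e, head e) :=
    ⟨fun e => e.out.1, fun e => e.out.2, fun e => (Quot.out_eq e).symm⟩
  obtain ⟨Y, hY⟩ := M.exists_arms hG
  let branch (u : V) : Set W := M.vertex u ∪ ⋃ e ∈ {e | e ∈ G.edgeSet ∧ tail e = u}, Y e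
  have mem_branch {u : V} {x : W} : x ∈ branch u ↔
      x ∈ M.vertex u ∨ ∃ e ∈ G.edgeSet, tail e = u ∧ x ∈ Y e := by
    simp [branch, and_assoc]
  have eq_tail {u : V} {e : Sym2 V} {x : W} (he : e ∈ G.edgeSet) (hx : x ∈ M.vertex u)
      (hxe : x ∈ Y e) : u = tail e := by
    by_contra hu
    obtain ⟨hxM, hxh⟩ := (hY e he).1 hxe
    refine disjoint_left.1 (M.disjoint_edge_vertex he ?_) hxM hx
    rw [hG e, Sym2.mem_iff]
    rintro (rfl | rfl)
    exacts [hu rfl, hxh hx]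
  refine ⟨⟨branch, fun u => ?_, fun u => ?_, fun {u v x} hu hv => ?_, fun {u v} huv => ?_⟩⟩
  · exact (M.vertex_spec u).1.union <| (toFinite _).biUnion fun e he =>
      (M.edge_spec he.1).1.subset ((hY e he.1).1.trans sdiff_subset)
  · refine connected_induce_union_biUnion (M.vertex_spec u).2 fun e ⟨he, hu⟩ => ?_
    exact ⟨(hY e he).2.2.1, hu ▸ (hY e he).2.1⟩
  · rcases mem_branch.1 hu with hu' | ⟨e, he, rfl, hu'⟩ <;>
      rcases mem_branch.1 hv with hv' | ⟨e', he', rfl, hv'⟩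
    · exact by_contra fun huv => disjoint_left.1 (M.disjoint_vertex huv) hu' hv'
    · exact eq_tail he' hu' hv'
    · exact (eq_tail he hv' hu').symm
    · exact congrArg tail <| by_contra fun hee' => disjoint_left.1 (M.disjoint_edge he he' hee')
        ((hY e he).1 hu').1 ((hY e' he').1 hv').1
  · obtain ⟨x, hx, y, hy, hxy⟩ := (hY _ (G.mem_edgeSet.2 huv)).2.2.2
    have hx' := mem_branch.2 (.inr ⟨_, G.mem_edgeSet.2 huv, rfl, hx⟩)
    have hy' := mem_branch.2 (.inl hy)
    rcases Sym2.eq_iff.1 (hG s(u, v)) with ⟨hu, hv⟩ | ⟨hu, hv⟩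
    · exact ⟨x, hu ▸ hx', y, hv ▸ hy', hxy⟩
    · exact ⟨y, hu ▸ hy', x, hv ▸ hx', hxy.symm⟩

end OverlapModel

theorem latticeGraph_induce_prod_preconnected {I J : Set ℤ} [I.OrdConnected] [J.OrdConnected] :
    (latticeGraph.induce (I ×ˢ J)).Preconnected := by
  have hasse_adj {I : Set ℤ} [I.OrdConnected] {a b : I} (h : (SimpleGraph.hasse I).Adj a b) :
      (SimpleGraph.hasse ℤ).Adj (a : ℤ) b := by
    have hcov {a b : I} (h : a ⋖ b) : (a : ℤ) ⋖ b :=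
      (OrdConnected.apply_covBy_apply_iff (OrderEmbedding.subtype (· ∈ I))
        (by simpa using ‹I.OrdConnected›)).2 h
    exact h.imp hcov hcov
  let f : (SimpleGraph.hasse I □ SimpleGraph.hasse J) →g latticeGraph.induce (I ×ˢ J) :=
    { toFun := fun p => ⟨(p.1, p.2), p.1.2, p.2.2⟩
      map_rel' := by
        rintro p q (⟨h, h'⟩ | ⟨h, h'⟩)
        · exact .inl ⟨hasse_adj h, congrArg Subtype.val h'⟩
        · exact .inr ⟨hasse_adj h, congrArg Subtype.val h'⟩ }
  refine ((SimpleGraph.hasse_preconnected_of_succ I).boxProd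
    (SimpleGraph.hasse_preconnected_of_succ J)).map f ?_
  rintro ⟨⟨a, b⟩, ha, hb⟩
  exact ⟨(⟨a, ha⟩, ⟨b, hb⟩), rfl⟩

/-- The point of the square grid of mesh `δ` with integer coordinates `p`. -/
def gridPoint (δ : ℝ) (p : ℤ × ℤ) : ℝ × ℝ := δ • ((p.1 : ℝ), (p.2 : ℝ))

/-- The grid points near `S`, as a set of lattice points that inherits the connectedness of `S`
and, for small `δ`, its disjointness from other compact sets. -/
def pixels (δ : ℝ) (S : Set (ℝ × ℝ)) : Set (ℤ × ℤ) := gridPoint δ ⁻¹' Metric.cthickening δ S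

section Pixels

variable {δ : ℝ}

theorem dist_gridPoint (hδ : 0 ≤ δ) (p q : ℤ × ℤ) :
    dist (gridPoint δ p) (gridPoint δ q) = δ * dist p q := by
  rw [gridPoint, gridPoint, dist_smul₀, Real.norm_of_nonneg hδ, Prod.dist_eq, Prod.dist_eq]
  simp only [Int.dist_cast_real]

theorem exists_dist_gridPoint_le (hδ : 0 < δ) (x : ℝ × ℝ) :
    ∃ p, dist (gridPoint δ p) x ≤ δ / 2 := by
  have key (t : ℝ) : dist (δ * round (t / δ)) t ≤ δ / 2 := by
    have h : δ * round (t / δ) - t = -(δ * (t / δ - round (t / δ))) := by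
      field_simp
      ring
    rw [Real.dist_eq, h, abs_neg, abs_mul, abs_of_pos hδ]
    linarith [mul_le_mul_of_nonneg_left (abs_sub_round (t / δ)) hδ.le]
  exact ⟨(round (x.1 / δ), round (x.2 / δ)), max_le (key x.1) (key x.2)⟩

theorem finite_pixels (hδ : 0 < δ) {S : Set (ℝ × ℝ)} (hS : Bornology.IsBounded S) :
    (pixels δ S).Finite := by
  have hanti : AntilipschitzWith (Real.toNNReal δ⁻¹) (gridPoint δ) :=
    .of_le_mul_dist fun p q => by
      rw [dist_gridPoint hδ.le, Real.coe_toNNReal _ (inv_nonneg.2 hδ.le),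
        inv_mul_cancel_left₀ hδ.ne']
  exact (Metric.isCompact_of_isClosed_isBounded (isClosed_discrete _)
    (hanti.isBounded_preimage hS.cthickening)).finite_of_discrete

theorem gridPoint_preimage_subset_pixels {S : Set (ℝ × ℝ)} {x : ℝ × ℝ} (hx : x ∈ S) :
    gridPoint δ ⁻¹' Metric.closedBall x δ ⊆ pixels δ S :=
  preimage_mono (Metric.closedBall_subset_cthickening hx δ)

theorem preconnected_gridPoint_preimage (hδ : 0 ≤ δ) (x : ℝ × ℝ) :
    (latticeGraph.induce (gridPoint δ ⁻¹' Metric.closedBall x δ)).Preconnected := by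
  let slice (t : ℝ) : Set ℤ := (fun a : ℤ => δ * a) ⁻¹' Metric.closedBall t δ
  have hball : gridPoint δ ⁻¹' Metric.closedBall x δ = slice x.1 ×ˢ slice x.2 := by
    ext p
    exact max_le_iff (α := ℝ)
  have hord (t : ℝ) : (slice t).OrdConnected := by
    have : (Metric.closedBall t δ).OrdConnected := Real.closedBall_eq_Icc ▸ ordConnected_Icc
    have hmono : Monotone fun a : ℤ => δ * a := fun a b hab =>
      mul_le_mul_of_nonneg_left (Int.cast_le.2 hab) hδ
    exact this.preimage_mono hmono
  have := hord x.1
  have := hord x.2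
  rw [hball]
  exact latticeGraph_induce_prod_preconnected

theorem connected_pixels (hδ : 0 < δ) {S : Set (ℝ × ℝ)} (hS : IsCompact S) (hconn : IsConnected S) :
    (latticeGraph.induce (pixels δ S)).Connected := by
  let ball (x : ℝ × ℝ) : Set (ℤ × ℤ) := gridPoint δ ⁻¹' Metric.closedBall x δ
  have hball {x : ℝ × ℝ} (hx : x ∈ S) : ball x ⊆ pixels δ S := gridPoint_preimage_subset_pixels hx
  have hinter {x y : ℝ × ℝ} (hxy : dist x y ≤ δ / 2) : (ball x ∩ ball y).Nonempty := by
    obtain ⟨p, hp⟩ := exists_dist_gridPoint_le hδ x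
    exact ⟨p, hp.trans (by linarith), (dist_triangle _ x y).trans (by linarith)⟩
  have hnear {x y : ℝ × ℝ} (hxy : dist x y ≤ δ / 2) :
      (latticeGraph.induce (ball x ∪ ball y)).Connected :=
    SimpleGraph.induce_union_connected (preconnected_gridPoint_preimage hδ.le x)
      (preconnected_gridPoint_preimage hδ.le y) (hinter hxy)
  have key {x y : ℝ × ℝ} (hx : x ∈ S) (hy : y ∈ S) :
      ∃ C ⊆ pixels δ S, ball x ⊆ C ∧ ball y ⊆ C ∧ (latticeGraph.induce C).Connected := by
    refine hconn.isPreconnected.induction₂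
      (fun x y => ∃ C ⊆ pixels δ S, ball x ⊆ C ∧ ball y ⊆ C ∧ (latticeGraph.induce C).Connected)
      (fun x hx => ?_) ?_ ?_ hx hy
    · filter_upwards [mem_nhdsWithin_of_mem_nhds (Metric.closedBall_mem_nhds x (half_pos hδ)),
        self_mem_nhdsWithin] with y hxy hy
      exact ⟨ball x ∪ ball y, union_subset (hball hx) (hball hy), subset_union_left,
        subset_union_right, hnear (dist_comm x y ▸ hxy)⟩
    · rintro x y z - - - ⟨C, hCS, hx, hy, hC⟩ ⟨D, hDS, hy', hz, hD⟩
      obtain ⟨p, hp, -⟩ := hinter (x := y) (y := y) (by simpa using half_pos hδ |>.le)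
      exact ⟨C ∪ D, union_subset hCS hDS, hx.trans subset_union_left, hz.trans subset_union_right,
        SimpleGraph.induce_union_connected hC.preconnected hD.preconnected ⟨p, hy hp, hy' hp⟩⟩
    · rintro x y - - ⟨C, hCS, hx, hy, hC⟩
      exact ⟨C, hCS, hy, hx, hC⟩
  obtain ⟨x, hx⟩ := hconn.nonempty
  obtain ⟨p, hp, -⟩ := hinter (x := x) (y := x) (by simpa using half_pos hδ |>.le)
  refine SimpleGraph.induce_connected_of_patches p (hball hx hp) fun {q} hq => ?_
  rw [pixels, mem_preimage, hS.cthickening_eq_biUnion_closedBall hδ.le] at hq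
  obtain ⟨y, hy, hq⟩ := mem_iUnion₂.1 hq
  obtain ⟨C, hCS, hxC, hyC, hC⟩ := key hx hy
  exact ⟨C, hCS, hxC hp, hyC hq, hC.preconnected _ _⟩

theorem eventually_disjoint_pixels {S T : Set (ℝ × ℝ)} (hS : IsCompact S) (hT : IsCompact T)
    (h : Disjoint S T) : ∀ᶠ δ in nhdsWithin 0 (Ioi 0), Disjoint (pixels δ S) (pixels δ T) := by
  obtain ⟨ε, hε, hST⟩ := h.exists_cthickenings hS hT.isClosed
  filter_upwards [Ioo_mem_nhdsGT hε] with δ hδ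
  exact (hST.mono (Metric.cthickening_mono hδ.2.le S)
    (Metric.cthickening_mono hδ.2.le T)).preimage _

theorem OverlapModel.pixelate {V : Type u} [Finite V] {G : SimpleGraph V}
    (M : OverlapModel G fun S : Set (ℝ × ℝ) => IsCompact S ∧ IsConnected S) :
    Nonempty (OverlapModel G fun S => S.Finite ∧ (latticeGraph.induce S).Connected) := by
  have hvertex : ∀ᶠ δ in nhdsWithin 0 (Ioi 0), ∀ u v, u ≠ v →
      Disjoint (pixels δ (M.vertex u)) (pixels δ (M.vertex v)) := by
    simp only [Filter.eventually_all]
    exact fun u v h => eventually_disjoint_pixels (M.vertex_spec u).1 (M.vertex_spec v).1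
      (M.disjoint_vertex h)
  have hedge_vertex : ∀ᶠ δ in nhdsWithin 0 (Ioi 0), ∀ e v, e ∈ G.edgeSet → v ∉ e →
      Disjoint (pixels δ (M.edge e)) (pixels δ (M.vertex v)) := by
    simp only [Filter.eventually_all]
    exact fun e v he h => eventually_disjoint_pixels (M.edge_spec he).1 (M.vertex_spec v).1
      (M.disjoint_edge_vertex he h)
  have hedge : ∀ᶠ δ in nhdsWithin 0 (Ioi 0), ∀ e e', e ∈ G.edgeSet → e' ∈ G.edgeSet → e ≠ e' →
      Disjoint (pixels δ (M.edge e)) (pixels δ (M.edge e')) := by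
    simp only [Filter.eventually_all]
    exact fun e e' he he' h => eventually_disjoint_pixels (M.edge_spec he).1 (M.edge_spec he').1
      (M.disjoint_edge he he' h)
  obtain ⟨δ, ⟨⟨hvertex, hedge_vertex⟩, hedge⟩, hδ⟩ :=
    (((hvertex.and hedge_vertex).and hedge).and self_mem_nhdsWithin).exists
  have hspec {S : Set (ℝ × ℝ)} (hS : IsCompact S ∧ IsConnected S) :
      (pixels δ S).Finite ∧ (latticeGraph.induce (pixels δ S)).Connected :=
    ⟨finite_pixels hδ hS.1.isBounded, connected_pixels hδ hS.1 hS.2⟩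
  refine ⟨⟨fun v => pixels δ (M.vertex v), fun e => pixels δ (M.edge e),
    fun v => hspec (M.vertex_spec v), fun he => hspec (M.edge_spec he), fun he hv => ?_,
    hvertex _ _, hedge_vertex _ _, hedge _ _⟩⟩
  obtain ⟨x, hxv, hxe⟩ := M.inter_nonempty he hv
  obtain ⟨p, hp⟩ := exists_dist_gridPoint_le hδ x
  have hp : p ∈ gridPoint δ ⁻¹' Metric.closedBall x δ := hp.trans (half_le_self (le_of_lt hδ))
  exact ⟨p, gridPoint_preimage_subset_pixels hxv hp, gridPoint_preimage_subset_pixels hxe hp⟩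

theorem isCompact_isConnected_insert_biUnion {X ι : Type*} [TopologicalSpace X] {x : X}
    {t : Set ι} {T : ι → Set X} (ht : t.Finite)
    (hT : ∀ i ∈ t, IsCompact (T i) ∧ IsConnected (T i) ∧ x ∈ T i) :
    IsCompact ({x} ∪ ⋃ i ∈ t, T i) ∧ IsConnected ({x} ∪ ⋃ i ∈ t, T i) := by
  refine ⟨isCompact_singleton.union (ht.isCompact_biUnion fun i hi => (hT i hi).1),
    ⟨x, .inl rfl⟩, isPreconnected_of_forall x ?_⟩
  rintro y (rfl | hy)
  · exact ⟨{y}, subset_union_left, rfl, rfl, isPreconnected_singleton⟩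
  · obtain ⟨i, hi, hy⟩ := mem_iUnion₂.1 hy
    exact ⟨T i, subset_union_of_subset_right (subset_biUnion_of_mem hi) _, (hT i hi).2.2, hy,
      (hT i hi).2.1.isPreconnected⟩

end Pixels

namespace PlaneEmbedding

variable {V : Type u} {G : SimpleGraph V} (E : PlaneEmbedding G)

/-- The arc of an unordered edge. -/
def edgeArc (e : Sym2 V) : Set (ℝ × ℝ) := {x | ∃ u v, ∃ h : G.Adj u v, e = s(u, v) ∧ x ∈ E.arc h}

variable {E}

theorem mem_of_pos_mem_edgeArc {e : Sym2 V} {v : V} (hv : E.pos v ∈ E.edgeArc e) : v ∈ e := by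
  obtain ⟨a, b, h, rfl, hv⟩ := hv
  exact Sym2.mem_iff.2 (E.pos_arc h v hv)

theorem exists_eq_pos {e e' : Sym2 V} {x : ℝ × ℝ} (hne : e ≠ e') (hx : x ∈ E.edgeArc e)
    (hx' : x ∈ E.edgeArc e') : ∃ v, x = E.pos v := by
  obtain ⟨a, b, h, rfl, hx⟩ := hx
  obtain ⟨c, d, h', rfl, hx'⟩ := hx'
  rcases (E.arc_inter h h' hne ⟨hx, hx'⟩).1 with hx | hx
  exacts [⟨a, hx⟩, ⟨b, hx⟩]

theorem exists_edge_parts (E : PlaneEmbedding G) {e : Sym2 V} (he : e ∈ G.edgeSet) :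
    ∃ (M : Set (ℝ × ℝ)) (T : V → Set (ℝ × ℝ)),
      (M ⊆ E.edgeArc e ∧ IsCompact M ∧ IsConnected M ∧ ∀ v ∈ e, E.pos v ∉ M) ∧
      (∀ v ∈ e, T v ⊆ E.edgeArc e ∧ IsCompact (T v) ∧ IsConnected (T v) ∧ E.pos v ∈ T v ∧
        (T v ∩ M).Nonempty) ∧
      ∀ u ∈ e, ∀ v ∈ e, u ≠ v → Disjoint (T u) (T v) := by
  classical
  induction e with | h u v
  obtain ⟨f, hf, hinj, h0, h1, harc⟩ := E.arc_curve he
  have hpart {a b : ℝ} (ha : 0 ≤ a) (hab : a ≤ b) (hb : b ≤ 1) : f '' Icc a b ⊆ E.edgeArc s(u, v) ∧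
      IsCompact (f '' Icc a b) ∧ IsConnected (f '' Icc a b) := by
    have hsub : Icc a b ⊆ Icc 0 1 := Icc_subset_Icc ha hb
    refine ⟨?_, isCompact_Icc.image_of_continuousOn (hf.mono hsub),
      (isConnected_Icc hab).image f (hf.mono hsub)⟩
    exact fun x hx => ⟨u, v, he, rfl, harc ▸ image_mono hsub hx⟩
  have hA := hpart (a := 0) (b := 1 / 3) (by norm_num) (by norm_num) (by norm_num)
  have hM := hpart (a := 1 / 3) (b := 2 / 3) (by norm_num) (by norm_num) (by norm_num)
  have hB := hpart (a := 2 / 3) (b := 1) (by norm_num) (by norm_num) (by norm_num)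
  have hAB : Disjoint (f '' Icc 0 (1 / 3)) (f '' Icc (2 / 3) 1) := by
    refine disjoint_image_image fun t ht t' ht' h => ?_
    have := hinj ⟨ht.1, ht.2.trans (by norm_num)⟩ ⟨le_trans (by norm_num) ht'.1, ht'.2⟩ h
    linarith [ht.2, ht'.1]
  refine ⟨f '' Icc (1 / 3) (2 / 3), fun x => f '' if x = u then Icc 0 (1 / 3) else Icc (2 / 3) 1,
    ⟨hM.1, hM.2.1, hM.2.2, ?_⟩, ?_, ?_⟩ <;>
    simp only [Sym2.mem_iff, forall_eq_or_imp, forall_eq, ↓reduceIte, he.ne']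
  · rw [← h0, ← h1, hinj.mem_image_iff (Icc_subset_Icc (by norm_num) (by norm_num)) (by simp),
      hinj.mem_image_iff (Icc_subset_Icc (by norm_num) (by norm_num)) (by simp)]
    norm_num
  · exact ⟨⟨hA.1, hA.2.1, hA.2.2, ⟨0, by norm_num, h0⟩,
        f (1 / 3), mem_image_of_mem f (by norm_num), mem_image_of_mem f (by norm_num)⟩,
      hB.1, hB.2.1, hB.2.2, ⟨1, by norm_num, h1⟩,
      f (2 / 3), mem_image_of_mem f (by norm_num), mem_image_of_mem f (by norm_num)⟩
  · exact ⟨⟨fun h => (h rfl).elim, fun _ => hAB⟩, fun _ => hAB.symm, fun h => (h rfl).elim⟩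

theorem nonempty_overlapModel [Finite V] (E : PlaneEmbedding G) :
    Nonempty (OverlapModel G fun S : Set (ℝ × ℝ) => IsCompact S ∧ IsConnected S) := by
  choose! M T hM hT hTdisj using fun e he => E.exists_edge_parts (e := e) he
  have hpos {e : Sym2 V} {u v : V} (he : e ∈ G.edgeSet) (hv : v ∈ e) (h : E.pos u ∈ T e v) :
      u = v := by
    have hu : u ∈ e := mem_of_pos_mem_edgeArc ((hT e he v hv).1 h)
    exact by_contra fun huv => disjoint_left.1 (hTdisj e he u hu v hv huv) (hT e he u hu).2.2.2.1 h
  have hposM {e : Sym2 V} {v : V} (he : e ∈ G.edgeSet) : E.pos v ∉ M e := fun hv =>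
    (hM e he).2.2.2 v (mem_of_pos_mem_edgeArc ((hM e he).1 hv)) hv
  let star (v : V) : Set (ℝ × ℝ) := {E.pos v} ∪ ⋃ e ∈ {e ∈ G.edgeSet | v ∈ e}, T e v
  have hstar (v : V) : IsCompact (star v) ∧ IsConnected (star v) :=
    isCompact_isConnected_insert_biUnion (toFinite _) fun e he =>
      have hTv := hT e he.1 v he.2
      ⟨hTv.2.1, hTv.2.2.1, hTv.2.2.2.1⟩
  have hT_star {e : Sym2 V} {v : V} (he : e ∈ G.edgeSet) (hv : v ∈ e) : T e v ⊆ star v :=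
    subset_union_of_subset_right (subset_biUnion_of_mem (s := {e ∈ G.edgeSet | v ∈ e})
      (u := fun e => T e v) ⟨he, hv⟩) _
  have of_mem_star {x : ℝ × ℝ} {v : V} (hx : x ∈ star v) :
      x = E.pos v ∨ ∃ e ∈ G.edgeSet, v ∈ e ∧ x ∈ T e v := by
    simpa only [star, singleton_union, mem_insert_iff, mem_iUnion, exists_prop, mem_ofPred_eq,
      and_assoc] using hx
  refine ⟨⟨star, M, fun v => hstar v, fun he => ⟨(hM _ he).2.1, (hM _ he).2.2.1⟩,
    fun {e v} he hv => ?_, fun {u v} huv => ?_, fun {e v} he hv => ?_,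
    fun {e e'} he he' hne => ?_⟩⟩
  · exact (hT e he v hv).2.2.2.2.mono (inter_subset_inter_left _ (hT_star he hv))
  · refine disjoint_left.2 fun x hxu hxv => huv ?_
    rcases of_mem_star hxu with rfl | ⟨e, he, hu, hxe⟩ <;>
      rcases of_mem_star hxv with hx | ⟨e', he', hv, hxe'⟩
    · exact E.pos_inj hx
    · exact hpos he' hv hxe'
    · exact (hpos he hu (hx ▸ hxe)).symm
    · rcases eq_or_ne e e' with rfl | hne
      · exact by_contra fun huv => disjoint_left.1 (hTdisj e he u hu v hv huv) hxe hxe'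
      · obtain ⟨w, rfl⟩ := exists_eq_pos hne ((hT e he u hu).1 hxe) ((hT e' he' v hv).1 hxe')
        exact (hpos he hu hxe).symm.trans (hpos he' hv hxe')
  · refine disjoint_left.2 fun x hxe hxv => ?_
    rcases of_mem_star hxv with rfl | ⟨e', he', hv', hxe'⟩
    · exact hposM he hxe
    · obtain ⟨w, rfl⟩ := exists_eq_pos (fun h : e = e' => hv (h ▸ hv')) ((hM e he).1 hxe)
        ((hT e' he' v hv').1 hxe')
      exact hposM he hxe
  · refine disjoint_left.2 fun x hx hx' => ?_
    obtain ⟨w, rfl⟩ := exists_eq_pos hne ((hM e he).1 hx) ((hM e' he').1 hx')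
    exact hposM he hx

end PlaneEmbedding

theorem exists_noncrossing_of_isPlanar {V : Type u} [Finite V] {G : SimpleGraph V}
    (hG : G.IsPlanar) : ∃ R : RotationSystem G, R.Noncrossing := by
  obtain ⟨E⟩ := hG
  obtain ⟨M⟩ := E.nonempty_overlapModel
  obtain ⟨M⟩ := M.pixelate
  obtain ⟨M⟩ := M.nonempty_minorModel
  exact M.exists_noncrossing latticeRotation_cyclesBound.noncrossing

section Forests

variable {V : Type u} {G : SimpleGraph V}

namespace RotationSystem

variable {R : RotationSystem G} {v a b c d : V} {F F' : Set (Sym2 V)}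

/-- `a` and `b` are opposite at a vertex `v` of degree four: they separate the other two
neighbours in the cyclic order. -/
def Opposite (R : RotationSystem G) (v a b : V) : Prop := ∃ c d, [a, c, b, d] ~r R.nbrs v

theorem Opposite.symm (h : R.Opposite v a b) : R.Opposite v b a := by
  obtain ⟨c, d, h⟩ := h
  exact ⟨d, c, .trans ⟨2, rfl⟩ h⟩

theorem Opposite.ne (h : R.Opposite v a b) : a ≠ b := by
  obtain ⟨c, d, h⟩ := h
  rintro rfl
  simpa using h.nodup_iff.2 (R.nodup_nbrs v)

theorem Opposite.eq (h : R.Opposite v a b) (h' : R.Opposite v a c) : b = c := by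
  obtain ⟨p, q, h⟩ := h
  obtain ⟨p', q', h'⟩ := h'
  have hnodup := h.nodup_iff.2 (R.nodup_nbrs v)
  obtain ⟨n, hn, hrot⟩ := List.isRotated_iff_mod.1 (h.trans h'.symm)
  simp only [List.length_cons, List.length_nil] at hn
  interval_cases n <;> simp_all

theorem Opposite.exists_other (h : R.Opposite v a b) :
    ∃ c d, c ≠ d ∧ (c ≠ a ∧ c ≠ b ∧ G.Adj v c) ∧ d ≠ a ∧ d ≠ b ∧ G.Adj v d := by
  obtain ⟨c, d, h⟩ := h
  have hnodup := h.nodup_iff.2 (R.nodup_nbrs v)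
  have hadj (x : V) (hx : x ∈ [a, c, b, d]) : G.Adj v x := R.mem_nbrs.1 (h.mem_iff.1 hx)
  refine ⟨c, d, ?_, ⟨?_, ?_, hadj c (by simp)⟩, ?_, ?_, hadj d (by simp)⟩ <;> grind

/-- `v` has exactly two `F`-neighbours, and they are opposite. -/
def IsStraight (R : RotationSystem G) (F : Set (Sym2 V)) (v : V) : Prop :=
  ∃ a b, R.Opposite v a b ∧ ∀ c, s(v, c) ∈ F ↔ c = a ∨ c = b

theorem not_isStraight_of_not_opposite (ha : s(v, a) ∈ F) (hb : s(v, b) ∈ F) (hab : a ≠ b)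
    (h : ¬ R.Opposite v a b) : ¬ R.IsStraight F v := by
  rintro ⟨p, q, hpq, hF⟩
  have := hpq.symm
  grind

theorem not_isStraight_of_three (ha : s(v, a) ∈ F) (hb : s(v, b) ∈ F) (hc : s(v, c) ∈ F)
    (hab : a ≠ b) (hac : a ≠ c) (hbc : b ≠ c) : ¬ R.IsStraight F v := by
  rintro ⟨p, q, -, hF⟩
  grind

theorem IsStraight.exists_opposite (h : R.IsStraight F v)
    (hF : ∀ c, s(v, c) ∈ F ↔ c = a ∨ s(v, c) ∈ F') (ha : s(v, a) ∉ F') :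
    ∃ b, R.Opposite v a b ∧ ∀ c, s(v, c) ∈ F' ↔ c = b := by
  obtain ⟨p, q, hpq, h⟩ := h
  have := hpq.ne
  rcases (h a).1 ((hF a).2 (.inl rfl)) with rfl | rfl
  · exact ⟨q, hpq, by grind⟩
  · exact ⟨p, hpq.symm, by grind⟩

theorem isStraight_congr (h : ∀ c, s(v, c) ∈ F ↔ s(v, c) ∈ F') :
    R.IsStraight F v ↔ R.IsStraight F' v := by
  simp only [IsStraight, h]

end RotationSystem

/-- `F` is the edge set of a spanning tree of the graph obtained from `G` by contracting the
complement of `U` to one vertex, encoded by connectivity, tested on cuts, and the number of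
edges. -/
structure IsForestOver (G : SimpleGraph V) (U : Set V) (F : Set (Sym2 V)) : Prop where
  subset_edgeSet : F ⊆ G.edgeSet
  exists_mem : ∀ e ∈ F, ∃ v ∈ U, v ∈ e
  exists_cut : ∀ W ⊆ U, W.Nonempty → ∃ u ∉ W, ∃ w ∈ W, s(u, w) ∈ F
  ncard_le : F.ncard ≤ U.ncard

/-- A path `y 0, …, y k` that leaves the complement of `U` at its first step and is nowhere
straight. -/
structure IsTurningPath (R : RotationSystem G) (U : Set V) (k : ℕ) (y : ℕ → V) : Prop where
  start_notMem : y 0 ∉ U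
  mem : ∀ i < k, y (i + 1) ∈ U
  injOn : InjOn y (Iic k)
  adj : ∀ i < k, G.Adj (y i) (y (i + 1))
  turn : ∀ i, i + 1 < k → ¬ R.Opposite (y (i + 1)) (y i) (y (i + 2))

/-- The edges of the path `y 0, …, y k`. -/
def pathEdges (k : ℕ) (y : ℕ → V) : Set (Sym2 V) := (fun i => s(y i, y (i + 1))) '' Iio k

variable {R : RotationSystem G} {U : Set V} {F F' : Set (Sym2 V)} {k : ℕ} {y : ℕ → V}

theorem IsTurningPath.ne (h : IsTurningPath R U k y) {i j : ℕ} (hi : i ≤ k) (hj : j ≤ k)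
    (hij : i ≠ j) : y i ≠ y j :=
  fun h' => hij (h.injOn hi hj h')

theorem IsTurningPath.snoc (h : IsTurningPath R U k y) {c : V} (hc : c ∈ U)
    (hcy : ∀ i ≤ k, c ≠ y i) (hadj : G.Adj (y k) c)
    (hturn : ∀ i, i + 1 = k → ¬ R.Opposite (y k) (y i) c) :
    IsTurningPath R U (k + 1) (Function.update y (k + 1) c) := by
  have old {i : ℕ} (hi : i ≤ k) : Function.update y (k + 1) c i = y i :=
    Function.update_of_ne (by omega) c y
  have new : Function.update y (k + 1) c (k + 1) = c := Function.update_self ..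
  refine ⟨(old (Nat.zero_le k)).symm ▸ h.start_notMem, fun i hi => ?_, fun i hi j hj hij => ?_,
    fun i hi => ?_, fun i hi => ?_⟩
  · rcases Nat.lt_succ_iff_lt_or_eq.1 hi with hi | rfl
    exacts [old hi ▸ h.mem i hi, new.symm ▸ hc]
  · rcases Nat.le_succ_iff.1 hi with hi | rfl <;> rcases Nat.le_succ_iff.1 hj with hj | rfl
    · exact h.injOn hi hj (by rwa [old hi, old hj] at hij)
    · exact absurd (by rw [← new, ← hij, old hi]) (hcy i hi)
    · exact absurd (by rw [← new, hij, old hj]) (hcy j hj)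
    · rfl
  · rw [old (Nat.le_of_lt_succ hi)]
    rcases Nat.lt_succ_iff_lt_or_eq.1 hi with hi | rfl
    exacts [(old hi).symm ▸ h.adj i hi, new.symm ▸ hadj]
  · rw [old (by omega), old (by omega)]
    rcases Nat.lt_succ_iff_lt_or_eq.1 hi with hi | rfl
    exacts [(old hi).symm ▸ h.turn i hi, new.symm ▸ hturn i rfl]

theorem exists_maximal_isTurningPath [Finite V] {w x : V} (hw : w ∉ U) (hx : x ∈ U)
    (hwx : G.Adj w x) : ∃ k y, IsTurningPath R U (k + 1) y ∧
      ∀ c ∈ U, (∀ i ≤ k + 1, c ≠ y i) → G.Adj (y (k + 1)) c → R.Opposite (y (k + 1)) (y k) c := by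
  have hnil : IsTurningPath R U 0 fun _ => w :=
    ⟨hw, by simp, by simp [InjOn], by simp, by simp⟩
  have hone : ∃ y, IsTurningPath R U 1 y :=
    ⟨_, hnil.snoc hx (fun _ _ h => hw (h ▸ hx)) hwx (by simp)⟩
  have hbdd : BddAbove {k | ∃ y, IsTurningPath R U (k + 1) y} := by
    refine ⟨Nat.card V, fun k ⟨y, hy⟩ => ?_⟩
    have := hy.injOn.ncard_image
    have := ncard_le_card (y '' Iic (k + 1))
    simp_all
    omega
  obtain ⟨y, hy⟩ := Nat.sSup_mem ⟨0, hone⟩ hbdd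
  refine ⟨_, y, hy, fun c hc hcy hadj => by_contra fun hopp => ?_⟩
  exact absurd (le_csSup hbdd ⟨_, hy.snoc hc hcy hadj (by rintro i ⟨⟩; exact hopp)⟩) (by simp)

theorem IsTurningPath.mem_pathEdges (hy : IsTurningPath R U k y) {i : ℕ} (hi : i ≤ k) {c : V} :
    s(y i, c) ∈ pathEdges k y ↔ (i < k ∧ c = y (i + 1)) ∨ ∃ j, i = j + 1 ∧ c = y j := by
  refine ⟨?_, ?_⟩
  · rintro ⟨j, hj, h⟩
    rw [Sym2.eq_iff] at h
    rcases h with ⟨h, rfl⟩ | ⟨rfl, h⟩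
    · obtain rfl := hy.injOn (mem_Iic.2 (le_of_lt hj)) hi h
      exact .inl ⟨hj, rfl⟩
    · exact .inr ⟨j, (hy.injOn (Nat.succ_le_of_lt hj) hi h).symm, rfl⟩
  · rintro (⟨hi, rfl⟩ | ⟨j, rfl, rfl⟩)
    exacts [⟨i, hi, rfl⟩, ⟨j, hi, Sym2.eq_swap⟩]

theorem IsForestOver.union_pathEdges [Finite V] (hy : IsTurningPath R U k y)
    (hF : IsForestOver G (U \ y '' Iic k) F) : IsForestOver G U (F ∪ pathEdges k y) where
  subset_edgeSet := union_subset hF.subset_edgeSet <| by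
    rintro _ ⟨i, hi, rfl⟩
    exact hy.adj i hi
  exists_mem := by
    rintro e (he | ⟨i, hi, rfl⟩)
    · obtain ⟨v, hv, hve⟩ := hF.exists_mem e he
      exact ⟨v, hv.1, hve⟩
    · exact ⟨_, hy.mem i hi, Sym2.mem_mk_right ..⟩
  exists_cut W hW hne := by
    classical
    by_cases hWy : ∃ i, i ≤ k ∧ y i ∈ W
    · obtain ⟨hi, hiW⟩ := Nat.find_spec hWy
      rcases hfind : Nat.find hWy with _ | j
      · exact absurd (hW (hfind ▸ hiW)) hy.start_notMem
      · have hjW : y j ∉ W := fun h => Nat.find_min hWy (m := j) (by omega) ⟨by omega, h⟩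
        rw [hfind] at hi hiW
        exact ⟨y j, hjW, _, hiW, .inr ⟨j, hi, rfl⟩⟩
    · have hWU : W ⊆ U \ y '' Iic k := by
        refine fun w hw => ⟨hW hw, ?_⟩
        rintro ⟨i, hi, rfl⟩
        exact hWy ⟨i, hi, hw⟩
      obtain ⟨u, hu, w, hw, huw⟩ := hF.exists_cut W hWU hne
      exact ⟨u, hu, w, hw, .inl huw⟩
  ncard_le := by
    have hpath : (pathEdges k y).ncard ≤ k := (ncard_image_le).trans_eq (by simp)
    have hinj : InjOn (fun i => y (i + 1)) (Iio k) := fun i hi j hj hij =>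
      Nat.succ_injective (hy.injOn (Nat.succ_le_of_lt hi) (Nat.succ_le_of_lt hj) hij)
    have hsub : (fun i => y (i + 1)) '' Iio k ⊆ U ∩ y '' Iic k := by
      rintro _ ⟨i, hi, rfl⟩
      exact ⟨hy.mem i hi, i + 1, Nat.succ_le_of_lt hi, rfl⟩
    have hk : k ≤ (U ∩ y '' Iic k).ncard := by
      simpa [hinj.ncard_image] using ncard_le_ncard hsub
    have := ncard_union_le F (pathEdges k y)
    have := ncard_inter_add_ncard_sdiff_eq_ncard U (y '' Iic k)
    have := hF.ncard_le
    omega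

theorem IsTurningPath.injOn_edge (hy : IsTurningPath R U k y) :
    InjOn (fun i => s(y i, y (i + 1))) (Iio k) := by
  intro i hi j hj hij
  have hi : i < k := hi
  have hj : j < k := hj
  rcases Sym2.eq_iff.1 hij with ⟨h, -⟩ | ⟨h, h'⟩
  · exact hy.injOn (mem_Iic.2 hi.le) (mem_Iic.2 hj.le) h
  · have := hy.injOn (mem_Iic.2 hi.le) (mem_Iic.2 hj) h
    have := hy.injOn (mem_Iic.2 hi) (mem_Iic.2 hj.le) h'
    omega

/-- The path from `y (r + 1)` to `y k` is turned around and attached to `z`. -/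
theorem IsForestOver.exchange [Finite V] (hy : IsTurningPath R U k y) (hF : IsForestOver G U F)
    (hyF : pathEdges k y ⊆ F) {r : ℕ} (hr : r < k) {z : V} (hz : G.Adj (y k) z)
    (hzU : z ∉ U ∨ ∃ j ≤ r, z = y j) :
    IsForestOver G U (insert s(y k, z) (F \ {s(y r, y (r + 1))})) where
  subset_edgeSet := insert_subset hz (sdiff_subset.trans hF.subset_edgeSet)
  exists_mem := by
    rintro e (rfl | he)
    · obtain ⟨j, rfl⟩ := Nat.exists_eq_succ_of_ne_zero (Nat.ne_of_gt (Nat.zero_lt_of_lt hr))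
      exact ⟨_, hy.mem j (Nat.lt_succ_self j), Sym2.mem_mk_left ..⟩
    · exact hF.exists_mem e he.1
  exists_cut W hW hne := by
    by_contra! hcut
    have hsame {a b : V} (hab : s(a, b) ∈ insert s(y k, z) (F \ {s(y r, y (r + 1))})) :
        a ∈ W ↔ b ∈ W :=
      ⟨fun ha => by_contra fun hb => hcut b hb a ha (by rwa [Sym2.eq_swap (a := b)]),
        fun hb => by_contra fun ha => hcut a ha b hb hab⟩
    have hpath {i j : ℕ} (hij : i ≤ j) (hj : j ≤ k) (hr' : r < i ∨ j ≤ r) :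
        y i ∈ W ↔ y j ∈ W := by
      induction j, hij using Nat.le_induction with
      | base => rfl
      | succ j hij ih =>
        refine (ih (by omega) (by omega)).trans (hsame (.inr ⟨hyF ⟨j, hj, rfl⟩, fun h => ?_⟩))
        have := hy.injOn_edge (mem_Iio.2 hj) (mem_Iio.2 hr) h
        omega
    have hrz : y r ∈ W ↔ z ∈ W := by
      rcases hzU with hz | ⟨j, hj, rfl⟩
      · have h0 := hpath (Nat.zero_le r) hr.le (.inr le_rfl)
        exact iff_of_false (fun h => hy.start_notMem (hW (h0.2 h))) fun h => hz (hW h)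
      · exact (hpath hj hr.le (.inr le_rfl)).symm
    have hr' : y r ∈ W ↔ y (r + 1) ∈ W :=
      hrz.trans ((hsame (.inl rfl)).symm.trans (hpath hr le_rfl (.inl (Nat.lt_succ_self r))).symm)
    obtain ⟨u, hu, w, hw, huw⟩ := hF.exists_cut W hW hne
    refine hcut u hu w hw (.inr ⟨huw, fun h => ?_⟩)
    rcases Sym2.eq_iff.1 h with ⟨rfl, rfl⟩ | ⟨rfl, rfl⟩
    exacts [hu (hr'.2 hw), hu (hr'.1 hw)]
  ncard_le := by
    have hrF : s(y r, y (r + 1)) ∈ F := hyF ⟨r, hr, rfl⟩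
    have := ncard_insert_le s(y k, z) (F \ {s(y r, y (r + 1))})
    have := ncard_sdiff_singleton_add_one hrF
    have := hF.ncard_le
    omega

/-- `F` contains exactly one edge at `y (i + 1)`, and it continues the step from `y i` straight
on. -/
def ContinuesStraight (R : RotationSystem G) (F : Set (Sym2 V)) (y : ℕ → V) (i : ℕ) : Prop :=
  ∃ h, R.Opposite (y (i + 1)) (y i) h ∧ ∀ c, s(y (i + 1), c) ∈ F ↔ c = h

theorem IsForestOver.mem_of_mem (hF : IsForestOver G U F) {u w : V} (hu : u ∉ U)
    (huw : s(u, w) ∈ F) : w ∈ U := by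
  obtain ⟨v, hv, hvu⟩ := hF.exists_mem _ huw
  rcases Sym2.mem_iff.1 hvu with rfl | rfl
  exacts [absurd hv hu, hv]

/-- An edge from `y (k + 1)` back to `z` is exchanged for the path edge that starts at `y r`. Here
`y r` is `z` if `z` lies on the last stretch of the path along which `F` continues straight, and
the first vertex of that stretch otherwise. -/
theorem exists_reattachment
    (hmax : ∀ c ∈ U, (∀ i ≤ k + 1, c ≠ y i) → G.Adj (y (k + 1)) c →
      R.Opposite (y (k + 1)) (y k) c) (hk : ContinuesStraight R F y k) :
    ∃ r ≤ k, ∃ z, ContinuesStraight R F y r ∧ G.Adj (y (k + 1)) z ∧ z ≠ y k ∧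
      s(y (k + 1), z) ∉ F ∧ (z ∉ U ∨ ∃ j ≤ r, z = y j) ∧
      ∀ i, i + 1 = r → (ContinuesStraight R F y i ↔ z = y r) := by
  classical
  have hex : ∃ s ≤ k, ∀ i, s ≤ i → i ≤ k → ContinuesStraight R F y i :=
    ⟨k, le_rfl, fun i hki hik => le_antisymm hki hik ▸ hk⟩
  obtain ⟨hsk, hs⟩ := Nat.find_spec hex
  set s := Nat.find hex
  have hmin (i : ℕ) (hi : i + 1 = s) : ¬ ContinuesStraight R F y i := fun h =>
    Nat.find_min hex (m := i) (by omega) ⟨by omega, fun j hij hjk => by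
      rcases hij.eq_or_lt with rfl | hij
      exacts [h, hs j (by omega) hjk]⟩
  obtain ⟨h, hopp, hF⟩ := hk
  obtain ⟨z, hzs, hzk, hzh, hadj⟩ : ∃ z, z ≠ y s ∧ z ≠ y k ∧ z ≠ h ∧ G.Adj (y (k + 1)) z := by
    obtain ⟨c, d, hcd, hc, hd⟩ := hopp.exists_other
    by_cases hcs : c = y s
    exacts [⟨d, hcs ▸ hcd.symm, hd⟩, ⟨c, hcs, hc⟩]
  have hzF : s(y (k + 1), z) ∉ F := fun hz => hzh ((hF z).1 hz)
  have hzU : z ∉ U ∨ ∃ j ≤ k, z = y j := by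
    by_contra! hz
    refine hzh (hopp.eq (hmax z hz.1 (fun i hi => ?_) hadj)).symm
    rcases Nat.le_succ_iff.1 hi with hi | rfl
    exacts [hz.2 i hi, hadj.ne']
  by_cases hj : ∃ j ≤ k, s < j ∧ z = y j
  · obtain ⟨j, hjk, hsj, rfl⟩ := hj
    exact ⟨j, hjk, _, hs j hsj.le hjk, hadj, hzk, hzF, .inr ⟨j, le_rfl, rfl⟩,
      fun i hi => iff_of_true (hs i (by omega) (by omega)) rfl⟩
  · push Not at hj
    exact ⟨s, hsk, z, hs s le_rfl hsk, hadj, hzk, hzF,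
      hzU.imp_right fun ⟨j, hjk, hz⟩ => ⟨j, not_lt.1 fun hsj => hj j hjk hsj hz, hz⟩,
      fun i hi => iff_of_false (hmin i hi) hzs⟩

theorem IsForestOver.notMem_of_image (hF : IsForestOver G (U \ y '' Iic k) F) {i j : ℕ}
    (hi : i ≤ k) (hj : j ≤ k) : s(y i, y j) ∉ F := fun h =>
  (hF.mem_of_mem (fun h => h.2 ⟨i, hi, rfl⟩) h).2 ⟨j, hj, rfl⟩

theorem IsTurningPath.mem_exchange_iff (hy : IsTurningPath R U k y) {i : ℕ} (hi : i + 1 < k)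
    {z : V} (hz : z ≠ y (i + 1)) (hF : s(y (i + 1), y (i + 2)) ∉ F) {c : V} :
    s(y (i + 1), c) ∈
        insert s(y k, z) ((F ∪ pathEdges k y) \ {s(y (i + 1), y (i + 2))}) ↔
      c = y i ∨ s(y (i + 1), c) ∈ F := by
  have hnew : s(y (i + 1), c) ≠ s(y k, z) := fun h => by
    rcases Sym2.eq_iff.1 h with ⟨h, -⟩ | ⟨h, -⟩
    exacts [hy.ne hi.le le_rfl hi.ne h, hz h.symm]
  have hturn : y i ≠ y (i + 2) := hy.ne (by omega) hi (by omega)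
  have hold : s(y (i + 1), c) = s(y (i + 1), y (i + 2)) ↔ c = y (i + 2) := Sym2.congr_right
  simp only [mem_insert_iff, hnew, false_or, mem_sdiff, mem_union, hy.mem_pathEdges hi.le, hi,
    true_and, mem_singleton_iff, hold]
  grind

theorem IsTurningPath.not_isStraight_exchange (hy : IsTurningPath R U (k + 1) y)
    (hF : IsForestOver G (U \ y '' Iic (k + 1)) F) {r : ℕ} (hr : r ≤ k) {z : V}
    (hyr : ContinuesStraight R F y r)
    (hz : ∀ i, i + 1 = r → (ContinuesStraight R F y i ↔ z = y r)) {i : ℕ} (hi : i < k) :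
    ¬ R.IsStraight
      (insert s(y (k + 1), z) ((F ∪ pathEdges (k + 1) y) \ {s(y r, y (r + 1))})) (y (i + 1)) := by
  set F₁ := insert s(y (k + 1), z) ((F ∪ pathEdges (k + 1) y) \ {s(y r, y (r + 1))})
  have hFF₁ {e : Sym2 V} (he : e ∈ F) : e ∈ F₁ :=
    .inr ⟨.inl he, fun h => hF.notMem_of_image (by omega) (by omega) (h ▸ he)⟩
  have hpath {j : ℕ} (hj : j ≤ k) (hjr : j ≠ r) : s(y j, y (j + 1)) ∈ F₁ :=
    .inr ⟨.inr ⟨j, Nat.lt_succ_of_le hj, rfl⟩, fun h => hjr (hy.injOn_edge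
      (mem_Iio.2 (Nat.lt_succ_of_le hj)) (mem_Iio.2 (Nat.lt_succ_of_le hr)) h)⟩
  have hne {c : V} (hc : s(y (i + 1), c) ∈ F) {j : ℕ} (hj : j ≤ k + 1) : y j ≠ c := by
    rintro rfl
    exact hF.notMem_of_image (by omega) hj hc
  have hturn : y i ≠ y (i + 2) := hy.ne (by omega) (by omega) (by omega)
  by_cases hir : i = r
  · subst hir
    obtain ⟨h, hopp, hFh⟩ := hyr
    have hh := (hFh h).2 rfl
    exact RotationSystem.not_isStraight_of_not_opposite (hpath hi (by omega)) (hFF₁ hh)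
      (hne hh (by omega)) fun h' => hturn (hopp.symm.eq h'.symm)
  have hback : s(y (i + 1), y i) ∈ F₁ := Sym2.eq_swap ▸ hpath hi.le hir
  by_cases hir' : i + 1 = r
  · subst hir'
    by_cases hzr : z = y (i + 1)
    · obtain ⟨h, -, hFh⟩ := (hz i rfl).2 hzr
      have hh := (hFh h).2 rfl
      have hend : s(y (i + 1), y (k + 1)) ∈ F₁ := .inl (hzr ▸ Sym2.eq_swap)
      exact RotationSystem.not_isStraight_of_three hback hend (hFF₁ hh)
        (hy.ne (by omega) le_rfl (by omega)) (hne hh (by omega)) (hne hh le_rfl)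
    · exact fun hstraight => mt (hz i rfl).1 hzr (hstraight.exists_opposite
        (fun c => hy.mem_exchange_iff (by omega) hzr (hF.notMem_of_image (by omega) (by omega)))
        (hF.notMem_of_image (by omega) (by omega)))
  · exact RotationSystem.not_isStraight_of_not_opposite hback (hpath hi hir') hturn
      (hy.turn i (by omega))

theorem ContinuesStraight.not_isStraight_exchange (hk : ContinuesStraight R F y k) {z : V}
    (hz : z ≠ y k) (hzF : s(y (k + 1), z) ∉ F) {e : Sym2 V} (he : e ∉ F) {F' : Set (Sym2 V)} :
    ¬ R.IsStraight (insert s(y (k + 1), z) ((F ∪ F') \ {e})) (y (k + 1)) := by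
  obtain ⟨h, hopp, hF⟩ := hk
  have hh := (hF h).2 rfl
  refine RotationSystem.not_isStraight_of_not_opposite (.inr ⟨.inl hh, ?_⟩) (.inl rfl) ?_
    fun h' => hz (hopp.symm.eq h').symm
  · rintro rfl
    exact he hh
  · rintro rfl
    exact hzF hh

theorem IsTurningPath.not_isStraight_union (hy : IsTurningPath R U (k + 1) y)
    (hend : ¬ R.IsStraight (F ∪ pathEdges (k + 1) y) (y (k + 1))) {i : ℕ} (hi : i ≤ k) :
    ¬ R.IsStraight (F ∪ pathEdges (k + 1) y) (y (i + 1)) := by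
  rcases hi.eq_or_lt with rfl | hi
  · exact hend
  · exact RotationSystem.not_isStraight_of_not_opposite
      (.inr ⟨i, by grind, Sym2.eq_swap⟩) (.inr ⟨i + 1, by grind, rfl⟩)
      (hy.ne (by omega) (by omega) (by omega)) (hy.turn i (by omega))

theorem IsTurningPath.continuesStraight (hy : IsTurningPath R U (k + 1) y)
    (hF : IsForestOver G (U \ y '' Iic (k + 1)) F)
    (hend : R.IsStraight (F ∪ pathEdges (k + 1) y) (y (k + 1))) : ContinuesStraight R F y k := by
  refine hend.exists_opposite (fun c => ?_) (hF.notMem_of_image le_rfl (Nat.le_succ k))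
  simp only [mem_union, hy.mem_pathEdges le_rfl]
  grind

theorem IsTurningPath.exists_forest [Finite V] (hy : IsTurningPath R U (k + 1) y)
    (hmax : ∀ c ∈ U, (∀ i ≤ k + 1, c ≠ y i) → G.Adj (y (k + 1)) c →
      R.Opposite (y (k + 1)) (y k) c)
    (hF : IsForestOver G (U \ y '' Iic (k + 1)) F) :
    ∃ F₁, IsForestOver G U F₁ ∧ (∀ i ≤ k, ¬ R.IsStraight F₁ (y (i + 1))) ∧
      ∀ v ∈ U \ y '' Iic (k + 1), ∀ c, s(v, c) ∈ F₁ ↔ s(v, c) ∈ F := by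
  have hpath {v : V} (hv : v ∈ U \ y '' Iic (k + 1)) (c : V) : s(v, c) ∉ pathEdges (k + 1) y := by
    rintro ⟨i, hi, h⟩
    rcases Sym2.eq_iff.1 h with ⟨rfl, -⟩ | ⟨-, rfl⟩
    exacts [hv.2 ⟨i, mem_Iic.2 (le_of_lt hi), rfl⟩, hv.2 ⟨i + 1, hi, rfl⟩]
  have hforest := hF.union_pathEdges hy
  by_cases hend : R.IsStraight (F ∪ pathEdges (k + 1) y) (y (k + 1))
  · have hk := hy.continuesStraight hF hend
    obtain ⟨r, hr, z, hyr, hadj, hzk, hzF, hzU, hz⟩ := exists_reattachment hmax hk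
    have hr_notMem : s(y r, y (r + 1)) ∉ F := hF.notMem_of_image (by omega) (by omega)
    refine ⟨_, hforest.exchange hy subset_union_right (Nat.lt_succ_of_le hr) hadj hzU,
      fun i hi => ?_, fun v hv c => ?_⟩
    · rcases hi.eq_or_lt with rfl | hi
      · exact hk.not_isStraight_exchange hzk hzF hr_notMem
      · exact hy.not_isStraight_exchange hF hr hyr hz hi
    · have hvz : s(v, c) ≠ s(y (k + 1), z) := fun h => by
        rcases Sym2.eq_iff.1 h with ⟨rfl, -⟩ | ⟨rfl, -⟩
        · exact hv.2 ⟨k + 1, mem_Iic.2 le_rfl, rfl⟩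
        · rcases hzU with hzU | ⟨j, hj, rfl⟩
          exacts [hzU hv.1, hv.2 ⟨j, mem_Iic.2 (by omega), rfl⟩]
      simp only [mem_insert_iff, hvz, mem_sdiff, mem_union, hpath hv, or_false, false_or,
        mem_singleton_iff, and_iff_left_iff_imp]
      exact fun h he => hr_notMem (he ▸ h)
  · exact ⟨_, hforest, fun i => hy.not_isStraight_union hend, fun v hv c => by
      simp only [mem_union, hpath hv, or_false]⟩

theorem exists_isForestOver [Finite V] (R : RotationSystem G) (hG : G.Preconnected) (U : Set V)
    (hU : U ≠ univ) : ∃ F, IsForestOver G U F ∧ ∀ v ∈ U, ¬ R.IsStraight F v := by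
  induction U using WellFoundedLT.induction with
  | _ U ih =>
    obtain ⟨w₀, hw₀⟩ := (ne_univ_iff_exists_notMem U).1 hU
    rcases U.eq_empty_or_nonempty with rfl | ⟨x₀, hx₀⟩
    · exact ⟨∅, ⟨empty_subset _, by simp,
        fun W hW hne => absurd (subset_empty_iff.1 hW) hne.ne_empty, by simp⟩, by simp⟩
    obtain ⟨⟨⟨w, x⟩, hwx⟩, -, hw, hx⟩ :=
      (hG w₀ x₀).some.exists_boundary_dart Uᶜ hw₀ (not_not.2 hx₀)
    obtain ⟨k, y, hy, hmax⟩ := exists_maximal_isTurningPath (R := R) hw (not_not.1 hx) hwx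
    have hlt : U \ y '' Iic (k + 1) ⊂ U :=
      ⟨sdiff_subset, fun h => (h (hy.mem 0 k.succ_pos)).2 ⟨1, by simp, rfl⟩⟩
    obtain ⟨F, hF, hFstraight⟩ := ih _ hlt fun h => hU (univ_subset_iff.1 (h ▸ hlt.subset))
    obtain ⟨F₁, hF₁, hpath, hrest⟩ := hy.exists_forest hmax hF
    refine ⟨F₁, hF₁, fun v hv => ?_⟩
    by_cases hvy : v ∈ y '' Iic (k + 1)
    · obtain ⟨_ | i, hi, rfl⟩ := hvy
      exacts [absurd hv hy.start_notMem, hpath i (Nat.le_of_succ_le_succ hi)]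
    · exact mt (RotationSystem.isStraight_congr (hrest v ⟨hv, hvy⟩)).1 (hFstraight v ⟨hv, hvy⟩)

end Forests

namespace RotationSystem

variable {V : Type u} {G : SimpleGraph V} {R : RotationSystem G}

theorem Contour.ncard_edges [Finite V] {X : Set V} {E : Set (Sym2 V)} {ℓ : List (V × V)}
    (h : R.Contour X E ℓ) : E.ncard + 1 = X.ncard := by
  induction h with
  | single v => simp
  | @join X Y E F u w B C h₁ h₂ hd ih₁ ih₂ =>
    have hu := (h₁.mem_iff.1 List.mem_cons_self).1
    have hw := (h₂.mem_iff.1 List.mem_cons_self).1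
    have hXY := disjoint_left.1 hd
    have hdisj : Disjoint E F := disjoint_left.2 fun e hE hF => by
      induction e with
      | _ a b => exact hXY (h₁.edge hE).1 (h₂.edge hF).1
    have hnew : s(u, w) ∉ E ∪ F := by
      rintro (h | h)
      exacts [hXY (h₁.edge h).2.1 hw, hXY hu (h₂.edge h).1]
    rw [ncard_insert_of_notMem hnew, ncard_union_eq hdisj, ncard_union_eq hd]
    omega
  | rotate _ _ ih => exact ih

theorem Contour.union_isForestOver [Finite V] {U : Set V} {E F : Set (Sym2 V)}
    {ℓ : List (V × V)} (h : R.Contour Uᶜ E ℓ) (hF : IsForestOver G U F) :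
    ∃ ℓ', R.Contour univ (E ∪ F) ℓ' := by
  obtain ⟨E', hsub, ℓ', h'⟩ := h.exists_extension finite_univ (subset_univ _)
    (A := F) fun Y hUY hY => by
      obtain ⟨u, hu, w, hw, huw⟩ := hF.exists_cut Yᶜ (compl_subset_comm.1 hUY)
        (nonempty_compl.2 (ssubset_univ_iff.1 hY))
      exact ⟨u, not_not.1 hu, w, ⟨trivial, hw⟩, hF.subset_edgeSet huw, huw⟩
  have hcard : (E ∪ F).ncard ≤ E'.ncard := by
    have := ncard_union_le E F
    have := h.ncard_edges
    have := h'.ncard_edges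
    have := hF.ncard_le
    have := ncard_add_ncard_compl U
    rw [ncard_univ] at *
    omega
  exact ⟨ℓ', eq_of_subset_of_ncard_le hsub hcard ▸ h'⟩

end RotationSystem

theorem sublist_of_isChain_idxOf {α : Type*} [BEq α] [LawfulBEq α] {l m : List α}
    (hl : l.Nodup) (hm : ∀ a ∈ m, a ∈ l)
    (h : List.IsChain (fun a b => l.idxOf a < l.idxOf b) m) : m <+ l := by
  have hlt : l.Pairwise fun a b => l.idxOf a < l.idxOf b :=
    List.pairwise_iff_getElem.2 fun i j hi hj hij => by
      rwa [hl.idxOf_getElem, hl.idxOf_getElem]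
  have hm' := h.pairwise
  have : Std.Antisymm fun a b : α => l.idxOf a < l.idxOf b := ⟨fun _ _ h h' => absurd h' h.asymm⟩
  exact List.sublist_of_subperm_of_pairwise
    (List.subperm_of_subset (hm'.imp fun h => by rintro rfl; exact h.false) hm) hm' hlt

/-- A two-page book embedding: `x` places the vertices on the spine, and `top` contains the edges
of one of the two pages. -/
def HasTwoPageBook {V : Type u} (G : SimpleGraph V) : Prop :=
  ∃ (x : V → ℕ) (top : Set (Sym2 V)), Function.Injective x ∧
    ∀ ⦃a b p q⦄, G.Adj a b → G.Adj p q → (s(a, b) ∈ top ↔ s(p, q) ∈ top) →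
      ¬ (x a < x p ∧ x p < x b ∧ x b < x q)

namespace RotationSystem

variable {V : Type u} {G : SimpleGraph V} {R : RotationSystem G} {E top : Set (Sym2 V)}
  {P T : List (V × V)}

theorem exists_sublist_of_isChain_contourStep {d f : V × V} {l m : List (V × V)}
    (h : List.IsChain (ContourStep (fun _ _ _ => True) E) (d :: l)) (hd : s(d.1, d.2) ∉ E)
    (hf : f :: m <+ l) (hfd : f.1 ≠ d.1) : ∃ y, s(d.1, y) ∈ E ∧ (d.1, y) :: f :: m <+ l := by
  induction l generalizing d with
  | nil => simp at hf
  | cons g l ih =>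
    rw [List.isChain_cons_cons] at h
    have hgd : g.1 = d.1 := h.1.1.trans (by rw [turn_of_notMem hd])
    have hfl : f :: m <+ l := hf.of_cons_of_ne (by rintro rfl; exact hfd hgd)
    by_cases hg : s(g.1, g.2) ∈ E
    · exact ⟨g.2, hgd ▸ hg, hgd ▸ hfl.cons_cons g⟩
    · obtain ⟨y, hy, hs⟩ := ih h.2 hg hfl (hgd ▸ hfd)
      exact ⟨y, hgd ▸ hy, hgd ▸ hs.cons g⟩

theorem exists_insert_sublist {d f : V × V} {l p m : List (V × V)}
    (h : List.IsChain (ContourStep (fun _ _ _ => True) E) l) (hs : p ++ d :: f :: m <+ l)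
    (hd : s(d.1, d.2) ∉ E) (hfd : f.1 ≠ d.1) :
    ∃ y, s(d.1, y) ∈ E ∧ p ++ d :: (d.1, y) :: f :: m <+ l := by
  obtain ⟨l₁, l₂, rfl, hp, hl₂⟩ := List.append_sublist_iff.1 hs
  obtain ⟨A, B, rfl, hB⟩ := exists_eq_append_cons_of_cons_sublist hl₂
  obtain ⟨y, hy, hyB⟩ := exists_sublist_of_isChain_contourStep
    (h.suffix ⟨l₁ ++ A, by simp⟩) hd hB hfd
  exact ⟨y, hy, hp.append ((hyB.cons_cons d).trans (List.sublist_append_right _ _))⟩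

theorem Contour.isRotated_of_map_sublist {ℓ : List (V × V)} (h : R.Contour univ E ℓ) {v : V}
    {m : List V} (hm : m.map (Prod.mk v) <+ ℓ) (hlen : (R.nbrs v).length ≤ m.length) :
    m ~r R.nbrs v := by
  classical
  have hrot := h.filter_base (mem_univ v)
  have hs := hm.filter (·.1 = v)
  rw [List.filter_eq_self.2 (by simp)] at hs
  rw [← hs.eq_of_length_le (by simpa [hrot.perm.length_eq] using hlen)] at hrot
  simpa using hrot.map Prod.snd

/-- A contour `P ++ T` of a spanning tree, given with a page `top` that contains the tree and at
most one further edge. Placing every vertex at one of its occurrences in `T`, and inside its block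
of edges outside `top` if there are any, gives a two-page book embedding. -/
structure SpineContour (R : RotationSystem G) (E top : Set (Sym2 V)) (P T : List (V × V)) :
    Prop where
  contour : R.Contour univ E (P ++ T)
  tree_subset : E ⊆ top
  subset_edgeSet : top ⊆ G.edgeSet
  subsingleton : (top \ E).Subsingleton
  head_mem : ∀ d ∈ (P ++ T).head?, s(d.1, d.2) ∈ E
  mem_top : ∀ d ∈ P, s(d.1, d.2) ∈ top
  exists_mem : ∀ v, ∃ d ∈ T, d.1 = v
  mem_prefix : ∀ v w, s(v, w) ∈ top \ E → v ∈ P.map Prod.fst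
  not_isStraight : ∀ v, R.IsStraight E v → ¬ R.IsStraight top v

namespace SpineContour

theorem not_isRotated (h : SpineContour R E top P T) {v a x c y : V} (hx : s(v, x) ∈ E)
    (hy : s(v, y) ∈ E) (ha : s(v, a) ∉ top) (hc : s(v, c) ∉ top) :
    ¬ [a, x, c, y] ~r R.nbrs v := by
  intro hrot
  have hxy : R.Opposite v x y := ⟨c, a, .trans ⟨3, rfl⟩ hrot⟩
  have mem_of_mem_top : ∀ b, s(v, b) ∈ top → b = x ∨ b = y := fun b hb => by
    have := hrot.mem_iff.2 (R.mem_nbrs.2 (h.subset_edgeSet hb))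
    simp only [List.mem_cons, List.not_mem_nil, or_false] at this
    grind
  have mem_E : ∀ b, b = x ∨ b = y → s(v, b) ∈ E := by rintro b (rfl | rfl) <;> assumption
  exact h.not_isStraight v
    ⟨x, y, hxy, fun b => ⟨fun hb => mem_of_mem_top b (h.tree_subset hb), mem_E b⟩⟩
    ⟨x, y, hxy, fun b => ⟨mem_of_mem_top b, fun hb => h.tree_subset (mem_E b hb)⟩⟩

theorem not_sublist (h : SpineContour R E top P T) (hdeg : ∀ v, (R.nbrs v).length ≤ 4)
    {v a c : V} {f : V × V} (ha : s(v, a) ∉ top) (hc : s(v, c) ∉ top) (hf : f.1 ≠ v) :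
    ¬ [(v, a), f, (v, c)] <+ P ++ T := by
  intro hs
  obtain ⟨e, l, hl⟩ := List.exists_cons_of_ne_nil fun h : P ++ T = [] => by simp [h] at hs
  have he : s(e.1, e.2) ∈ E := h.head_mem e (by simp [hl])
  have hcon := h.contour
  rw [hl] at hs hcon
  have haE : s(v, a) ∉ E := fun h' => ha (h.tree_subset h')
  have hcE : s(v, c) ∉ E := fun h' => hc (h.tree_subset h')
  have hchain := hcon.chain (Q := fun _ _ _ => True) fun v =>
    Cycle.chain_of_pairwise fun _ _ _ _ => trivial
  rw [Cycle.chain_coe_cons] at hchain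
  by_cases hev : e.1 = v
  · subst hev
    have hs' := (hs.of_cons_of_ne fun hd => haE (by rwa [← hd] at he)).cons_cons e
    obtain ⟨x, hx, hxs⟩ := exists_insert_sublist (p := [e])
      (hchain.prefix ⟨[e], by simp⟩) hs' haE hf
    have hm : [e.2, a, x, c].map (Prod.mk e.1) <+ e :: l :=
      .trans (.cons_cons _ (.cons_cons _ (.cons_cons _ (.cons _ (.refl _))))) hxs
    exact h.not_isRotated hx he ha hc
      (.trans ⟨3, rfl⟩ (hcon.isRotated_of_map_sublist hm (hdeg _)))
  · obtain ⟨x, hx, hxs⟩ := exists_insert_sublist (p := []) hchain (hs.append_right [e]) haE hf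
    obtain ⟨y, hy, hys⟩ := exists_insert_sublist (p := [(v, a), (v, x), f]) hchain hxs hcE hev
    have hm : [a, x, c, y].map (Prod.mk v) <+ e :: l :=
      sublist_of_concat_sublist_concat (l := [(v, a), (v, x), (v, c)])
        (.trans (.cons_cons _ (.cons_cons _ (.cons _ (.cons_cons _ (.cons_cons _ (.cons _
          .slnil)))))) hys) fun h' => hev (h' ▸ rfl)
    exact h.not_isRotated hx hy ha hc (hcon.isRotated_of_map_sublist hm (hdeg _))

theorem mem_of_notMem_top (h : SpineContour R E top P T) {v w : V} (hvw : G.Adj v w)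
    (htop : s(v, w) ∉ top) : (v, w) ∈ T :=
  (List.mem_append.1 (h.contour.mem_iff.2 ⟨mem_univ v, hvw⟩)).resolve_left
    fun hP => htop (h.mem_top _ hP)

theorem nodup (h : SpineContour R E top P T) : T.Nodup :=
  (List.nodup_append.1 h.contour.nodup).2.1

theorem exists_placement (h : SpineContour R E top P T) :
    ∃ x : V → V × V, (∀ v, x v ∈ T ∧ (x v).1 = v) ∧
      ∀ v w, G.Adj v w → s(v, w) ∉ top → s(v, (x v).2) ∉ top := by
  have hex : ∀ v, ∃ d : V × V, (d ∈ T ∧ d.1 = v) ∧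
      ∀ w, G.Adj v w → s(v, w) ∉ top → s(v, d.2) ∉ top := by
    intro v
    by_cases hv : ∃ w, G.Adj v w ∧ s(v, w) ∉ top
    · obtain ⟨w, hvw, hw⟩ := hv
      exact ⟨(v, w), ⟨h.mem_of_notMem_top hvw hw, rfl⟩, fun _ _ _ => hw⟩
    · obtain ⟨d, hd⟩ := h.exists_mem v
      exact ⟨d, hd, fun w hvw hw => absurd ⟨w, hvw, hw⟩ hv⟩
  choose x hx hx' using hex
  exact ⟨x, hx, hx'⟩

section Placement

variable [DecidableEq V]

theorem idxOf_lt_idxOf (h : SpineContour R E top P T) (hdeg : ∀ v, (R.nbrs v).length ≤ 4)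
    {v a c : V} {f : V × V} (ha : s(v, a) ∉ top) (hc : s(v, c) ∉ top) (hva : G.Adj v a)
    (hvc : G.Adj v c) (hfT : f ∈ T) (hf : f.1 ≠ v) (hlt : T.idxOf (v, a) < T.idxOf f) :
    T.idxOf (v, c) < T.idxOf f := by
  have hcT := h.mem_of_notMem_top hvc hc
  by_contra! hle
  have hne : T.idxOf f ≠ T.idxOf (v, c) := fun h' => hf (by rw [(List.idxOf_inj hfT).1 h'])
  refine h.not_sublist hdeg ha hc hf (.trans (sublist_of_isChain_idxOf h.nodup ?_ ?_)
    (List.sublist_append_right P T))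
  · simp [h.mem_of_notMem_top hva ha, hfT, hcT]
  · simp [hlt, lt_of_le_of_ne hle hne]

variable {x : V → V × V}

theorem idxOf_lt_of_placement (h : SpineContour R E top P T) (hdeg : ∀ v, (R.nbrs v).length ≤ 4)
    (hx : ∀ v, x v ∈ T ∧ (x v).1 = v)
    (hxtop : ∀ v w, G.Adj v w → s(v, w) ∉ top → s(v, (x v).2) ∉ top) {a b p q : V}
    (hab : G.Adj a b) (hpq : G.Adj p q) (hab' : s(a, b) ∉ top) (hpq' : s(p, q) ∉ top)
    (hlt : T.idxOf (x a) < T.idxOf (x p)) : T.idxOf (a, b) < T.idxOf (p, q) := by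
  have hap : a ≠ p := by rintro rfl; exact hlt.false
  have hadj : ∀ v, G.Adj v (x v).2 := fun v => by
    simpa [(hx v).2] using (h.contour.mem_iff.1 (List.mem_append_right P (hx v).1)).2
  have hxa : x a = (a, (x a).2) := Prod.ext (hx a).2 rfl
  have hxp : x p = (p, (x p).2) := Prod.ext (hx p).2 rfl
  have habT := h.mem_of_notMem_top hab hab'
  have hlt₁ : T.idxOf (a, b) < T.idxOf (x p) :=
    h.idxOf_lt_idxOf hdeg (hxtop a b hab hab') hab' (hadj a) hab (hx p).1
      (by rw [(hx p).2]; exact hap.symm) (hxa ▸ hlt)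
  by_contra! hle
  have hne : T.idxOf (p, q) ≠ T.idxOf (a, b) := fun h' =>
    hap (congrArg Prod.fst ((List.idxOf_inj (h.mem_of_notMem_top hpq hpq')).1 h')).symm
  have := h.idxOf_lt_idxOf hdeg hpq' (hxtop p q hpq hpq') hpq (hadj p) habT
    hap (lt_of_le_of_ne hle hne)
  rw [← hxp] at this
  exact this.asymm hlt₁

theorem not_alternate_of_notMem (h : SpineContour R E top P T) (hR : R.Noncrossing)
    (hdeg : ∀ v, (R.nbrs v).length ≤ 4) (hx : ∀ v, x v ∈ T ∧ (x v).1 = v)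
    (hxtop : ∀ v w, G.Adj v w → s(v, w) ∉ top → s(v, (x v).2) ∉ top) {a b p q : V}
    (hab : G.Adj a b) (hpq : G.Adj p q) (hab' : s(a, b) ∉ top) (hpq' : s(p, q) ∉ top) :
    ¬ (T.idxOf (x a) < T.idxOf (x p) ∧ T.idxOf (x p) < T.idxOf (x b) ∧
      T.idxOf (x b) < T.idxOf (x q)) := by
  rintro ⟨hap, hpb, hbq⟩
  have hba' : s(b, a) ∉ top := by rwa [Sym2.eq_swap]
  have hqp' : s(q, p) ∉ top := by rwa [Sym2.eq_swap]
  refine hR h.contour (fun hE => hab' (h.tree_subset hE)) (fun hE => hpq' (h.tree_subset hE)) ?_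
    (.trans (sublist_of_isChain_idxOf h.nodup (l := T) ?_ ?_) (List.sublist_append_right P T))
  · rw [Ne, Sym2.eq_iff]
    rintro (⟨rfl, -⟩ | ⟨-, rfl⟩)
    exacts [hap.false, hpb.false]
  · simp [h.mem_of_notMem_top, hab.symm, hpq.symm, *]
  · simp [h.idxOf_lt_of_placement hdeg hx hxtop, *, hab.symm, hpq.symm]

theorem not_alternate_of_mem (h : SpineContour R E top P T) (hx : ∀ v, x v ∈ T ∧ (x v).1 = v)
    {a b p q : V} (hab : s(a, b) ∈ top) (hpq : s(p, q) ∈ top) :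
    ¬ (T.idxOf (x a) < T.idxOf (x p) ∧ T.idxOf (x p) < T.idxOf (x b) ∧
      T.idxOf (x b) < T.idxOf (x q)) := by
  rintro ⟨hap, hpb, hbq⟩
  have hfst : ∀ {m : List V}, (m.map x).IsChain (fun d d' => T.idxOf d < T.idxOf d') →
      m <+ T.map Prod.fst := fun {m} hm => by
    have := (sublist_of_isChain_idxOf h.nodup (by simpa using fun v _ => (hx v).1) hm).map Prod.fst
    rwa [List.map_map, show Prod.fst ∘ x = id from funext fun v => (hx v).2, List.map_id] at this
  have hsT : [a, p, b, q] <+ T.map Prod.fst := hfst (by simp [*])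
  have hne {u v : V} (huv : T.idxOf (x u) < T.idxOf (x v)) : u ≠ v := by
    rintro rfl; exact huv.false
  have hna := h.contour.noAlternation
  rw [List.map_append] at hna
  by_cases habE : s(a, b) ∈ E
  · by_cases hpqE : s(p, q) ∈ E
    · exact hna (.inr habE) (.inr hpqE) (hne hap) (hne hpb) (hne hbq)
        (hne (hap.trans (hpb.trans hbq))).symm (hsT.trans (List.sublist_append_right _ _))
    · exact hna (a := p) (b := a) (.inl rfl) (.inr habE) (hne hap).symm (hne hap) (hne hpb)
        (hne hpb).symm ((List.singleton_sublist.2 (h.mem_prefix p q ⟨hpq, hpqE⟩)).append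
          (hfst (m := [a, p, b]) (by simp [*])))
  · by_cases hpqE : s(p, q) ∈ E
    · exact hna (a := b) (b := p) (.inl rfl) (.inr hpqE) (hne hpb).symm (hne hpb) (hne hbq)
        (hne hbq).symm ((List.singleton_sublist.2
          (h.mem_prefix b a ⟨Sym2.eq_swap ▸ hab, Sym2.eq_swap ▸ habE⟩)).append
          (hfst (m := [p, b, q]) (by simp [*])))
    · have := h.subsingleton ⟨hab, habE⟩ ⟨hpq, hpqE⟩
      rcases Sym2.eq_iff.1 this with ⟨rfl, -⟩ | ⟨-, rfl⟩
      exacts [hap.false, hpb.false]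

end Placement

theorem hasTwoPageBook (h : SpineContour R E top P T) (hR : R.Noncrossing)
    (hdeg : ∀ v, (R.nbrs v).length ≤ 4) : HasTwoPageBook G := by
  classical
  obtain ⟨x, hx, hxtop⟩ := h.exists_placement
  refine ⟨fun v => T.idxOf (x v), top, fun u v huv => ?_, fun a b p q hab hpq htop => ?_⟩
  · rw [← (hx u).2, ← (hx v).2, (List.idxOf_inj (hx u).1).1 huv]
  · by_cases hab' : s(a, b) ∈ top
    · exact h.not_alternate_of_mem hx hab' (htop.1 hab')
    · exact h.not_alternate_of_notMem hR hdeg hx hxtop hab hpq hab' (mt htop.2 hab')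

end SpineContour

section SmallDegree

theorem IsStraight.length_eq {F : Set (Sym2 V)} {v : V} (h : R.IsStraight F v) :
    (R.nbrs v).length = 4 := by
  obtain ⟨a, b, ⟨c, d, hrot⟩, -⟩ := h
  exact hrot.perm.length_eq.symm

theorem IsStraight.mem_of_subset {F F' : Set (Sym2 V)} {v c : V} (h : R.IsStraight F v)
    (h' : R.IsStraight F' v) (hsub : F ⊆ F') (hc : s(v, c) ∈ F') : s(v, c) ∈ F := by
  obtain ⟨a, b, hab, hF⟩ := h
  obtain ⟨a', b', -, hF'⟩ := h'
  have hne := hab.ne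
  have ha := (hF' a).1 (hsub ((hF a).2 (.inl rfl)))
  have hb := (hF' b).1 (hsub ((hF b).2 (.inr rfl)))
  rw [hF' c] at hc
  rw [hF c]
  grind

theorem exists_spineContour_of_length_ne [Finite V] [Nontrivial V] (hG : G.Preconnected) {r : V}
    (hr : (R.nbrs r).length ≠ 4) : ∃ E T, SpineContour R E E [] T := by
  obtain ⟨F, hF, hturn⟩ := exists_isForestOver R hG {r}ᶜ (by simp)
  have hroot : R.Contour {r}ᶜᶜ ∅ ((R.nbrs r).map (Prod.mk r)) := by
    rw [compl_compl]; exact .single r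
  obtain ⟨ℓ, hℓ⟩ := hroot.union_isForestOver hF
  rw [empty_union] at hℓ
  obtain ⟨e, he⟩ : F.Nonempty := by
    rw [← ncard_pos]
    have := hℓ.ncard_edges
    rw [ncard_univ] at this
    have := Finite.one_lt_card (α := V)
    omega
  induction e with
  | _ a b =>
    have hab : (a, b) ∈ ℓ := hℓ.mem_iff.2 ⟨mem_univ a, (hℓ.edge he).2.2⟩
    obtain ⟨l, hl⟩ := exists_isRotated_cons hab
    refine ⟨F, (a, b) :: l, ?_⟩
    have hcon := hℓ.rotate hl
    exact
      { contour := hcon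
        tree_subset := subset_rfl
        subset_edgeSet := hF.subset_edgeSet
        subsingleton := by simp
        head_mem := by simpa using he
        mem_top := by simp
        exists_mem := fun v => by
          obtain ⟨w, hw⟩ := hG.exists_adj_of_nontrivial v
          exact ⟨(v, w), hcon.mem_iff.2 ⟨mem_univ v, hw⟩, rfl⟩
        mem_prefix := by simp
        not_isStraight := fun v hv _ => by
          by_cases hvr : v = r
          · exact hr (hvr ▸ hv.length_eq)
          · exact hturn v hvr hv }

end SmallDegree

/-- At a vertex `v` of degree four, `b` comes right after `a` in the cyclic order. -/
def IsSucc (R : RotationSystem G) (v a b : V) : Prop := ∃ c d, [b, c, d, a] ~r R.nbrs v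

/-- A cycle `z 0, …, z n, z (n + 1) = z 0` that takes the next turn in the rotation system at
every vertex except possibly `z 0`. -/
structure IsFaceCycle (R : RotationSystem G) (n : ℕ) (z : ℕ → V) : Prop where
  two_le : 2 ≤ n
  injOn : InjOn z (Iic n)
  eq_zero : z (n + 1) = z 0
  adj : ∀ i ≤ n, G.Adj (z i) (z (i + 1))
  isSucc : ∀ i < n, R.IsSucc (z (i + 1)) (z i) (z (i + 2))

section FaceCycle

variable {v a b c : V} {n : ℕ} {z : ℕ → V}

theorem exists_isSucc (hv : (R.nbrs v).length = 4) (ha : G.Adj v a) : ∃ b, R.IsSucc v a b := by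
  obtain ⟨t, ht⟩ := exists_isRotated_cons (R.mem_nbrs.2 ha)
  have hlen := ht.perm.length_eq
  rw [hv] at hlen
  match t, hlen with
  | [b, c, d], _ => exact ⟨b, c, d, .trans ⟨3, rfl⟩ ht.symm⟩

theorem IsSucc.eq (h : R.IsSucc v a b) (h' : R.IsSucc v a c) : b = c := by
  obtain ⟨p, q, h⟩ := h
  obtain ⟨p', q', h'⟩ := h'
  have hnodup := h.nodup_iff.2 (R.nodup_nbrs v)
  obtain ⟨n, hn, hrot⟩ := List.isRotated_iff_mod.1 (h.trans h'.symm)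
  simp only [List.length_cons, List.length_nil] at hn
  interval_cases n <;> simp_all

theorem IsSucc.not_opposite (h : R.IsSucc v a b) : ¬ R.Opposite v a b := by
  obtain ⟨p, q, h⟩ := h
  rintro ⟨p', q', h'⟩
  have hnodup := h.nodup_iff.2 (R.nodup_nbrs v)
  obtain ⟨n, hn, hrot⟩ := List.isRotated_iff_mod.1 (h.trans h'.symm)
  simp only [List.length_cons, List.length_nil] at hn
  interval_cases n <;> simp_all

theorem IsSucc.ne (h : R.IsSucc v a b) : a ≠ b := by
  obtain ⟨p, q, h⟩ := h
  rintro rfl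
  simpa using h.nodup_iff.2 (R.nodup_nbrs v)

theorem chain_isSucc (hv : (R.nbrs v).length = 4) : Cycle.Chain (R.IsSucc v) (R.nbrs v) := by
  obtain ⟨a, b, c, d, h⟩ := List.length_eq_four.1 hv
  rw [h, Cycle.chain_coe_cons]
  simp only [List.cons_append, List.nil_append, List.isChain_cons_cons, List.isChain_singleton,
    and_true, IsSucc, h]
  exact ⟨⟨c, d, 3, rfl⟩, ⟨d, a, 2, rfl⟩, ⟨a, b, 1, rfl⟩, ⟨b, c, 0, rfl⟩⟩

theorem exists_isSucc_walk [Nonempty V] (hdeg : ∀ v, (R.nbrs v).length = 4) :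
    ∃ z : ℕ → V, (∀ i, G.Adj (z i) (z (i + 1))) ∧ ∀ i, R.IsSucc (z (i + 1)) (z i) (z (i + 2)) := by
  have hex (v a : V) : ∃ b, G.Adj v a → R.IsSucc v a b := by
    by_cases ha : G.Adj v a
    · exact (exists_isSucc (hdeg v) ha).imp fun _ h _ => h
    · exact ⟨a, fun h => absurd h ha⟩
  choose next hnext using hex
  obtain ⟨v₀⟩ := ‹Nonempty V›
  obtain ⟨v₁, hv₁⟩ := List.exists_mem_of_length_pos ((hdeg v₀).symm ▸ four_pos)
  let d : ℕ → V × V := fun k => (fun p : V × V => (p.2, next p.2 p.1))^[k] (v₀, v₁)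
  have d_succ (k : ℕ) : d (k + 1) = ((d k).2, next (d k).2 (d k).1) :=
    Function.iterate_succ_apply' ..
  have hadj (k : ℕ) : G.Adj (d k).1 (d k).2 := by
    induction k with
    | zero => exact R.mem_nbrs.1 hv₁
    | succ k ih =>
      rw [d_succ]
      obtain ⟨p, q, hrot⟩ := hnext _ _ ih.symm
      exact R.mem_nbrs.1 (hrot.mem_iff.1 (by simp))
  have fst_succ (k : ℕ) : (d (k + 1)).1 = (d k).2 := by rw [d_succ]
  refine ⟨fun k => (d k).1, fun k => by simpa only [fst_succ] using hadj k, fun k => ?_⟩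
  simp only [fst_succ]
  rw [d_succ]
  exact hnext _ _ (hadj k).symm

theorem exists_isFaceCycle [Finite V] [Nonempty V] (hdeg : ∀ v, (R.nbrs v).length = 4) :
    ∃ n z, R.IsFaceCycle n z := by
  classical
  obtain ⟨z, hadj, hsucc⟩ := exists_isSucc_walk hdeg
  have hex : ∃ j, ∃ i < j, z i = z j := by
    obtain ⟨i, j, hij, h⟩ := Finite.exists_ne_map_eq_of_infinite z
    exact hij.lt_or_gt.elim (fun hlt => ⟨j, i, hlt, h⟩) fun hlt => ⟨i, j, hlt, h.symm⟩
  obtain ⟨i, hij, hz⟩ := Nat.find_spec hex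
  have hmin (m : ℕ) (hm : m < Nat.find hex) (k : ℕ) (hk : k < m) : z k ≠ z m :=
    fun h => Nat.find_min hex hm ⟨k, hk, h⟩
  obtain ⟨n, hn⟩ : ∃ n, Nat.find hex = i + (n + 1) := ⟨Nat.find hex - i - 1, by omega⟩
  rw [hn] at hz hmin
  refine ⟨n, fun k => z (i + k), ?_, fun a ha b hb hab => ?_, hz.symm, fun k _ => hadj _,
    fun k _ => hsucc _⟩
  · by_contra! hlt
    interval_cases n
    exacts [(hadj i).ne hz, (hsucc i).ne hz]
  · rw [mem_Iic] at ha hb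
    rcases lt_trichotomy a b with h | h | h
    exacts [absurd hab (hmin _ (by omega) _ (by omega)), h,
      absurd hab.symm (hmin _ (by omega) _ (by omega))]

theorem Contour.exists_path {k : ℕ} (hinj : InjOn z (Iic k))
    (hadj : ∀ i < k, G.Adj (z i) (z (i + 1))) :
    ∃ ℓ, R.Contour (z '' Iic k) (pathEdges k z) ℓ := by
  induction k with
  | zero =>
    have hIic : Iic 0 = ({0} : Set ℕ) := Iic_bot
    exact ⟨_, by simpa [pathEdges, hIic] using Contour.single (R := R) (z 0)⟩
  | succ k ih =>
    obtain ⟨ℓ, h⟩ := ih (hinj.mono (Iic_subset_Iic.2 k.le_succ)) fun i hi => hadj i (by omega)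
    obtain ⟨ℓ', h'⟩ := h.exists_insert (mem_image_of_mem z (mem_Iic.2 le_rfl))
      (fun ⟨i, hi, hz⟩ => by
        rw [mem_Iic] at hi
        have := hinj (mem_Iic.2 (by omega)) (mem_Iic.2 le_rfl) hz
        omega) (hadj k k.lt_succ_self)
    refine ⟨ℓ', ?_⟩
    rwa [pathEdges, ← Order.succ_eq_add_one, Order.Iic_succ, Order.Iio_succ_eq_insert,
      image_insert_eq, image_insert_eq]

theorem isStraight_pathEdges_union {F : Set (Sym2 V)} (hv : v ∉ z '' Iic n) :
    R.IsStraight (pathEdges n z ∪ F) v ↔ R.IsStraight F v := by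
  refine isStraight_congr fun c => ?_
  have hpath : s(v, c) ∉ pathEdges n z := by
    rintro ⟨i, hi, h⟩
    rw [mem_Iio] at hi
    rcases Sym2.eq_iff.1 h with ⟨rfl, -⟩ | ⟨-, rfl⟩
    exacts [hv (mem_image_of_mem z (mem_Iic.2 hi.le)), hv (mem_image_of_mem z (mem_Iic.2 hi))]
  simp [hpath]

namespace IsFaceCycle

theorem ne (hz : R.IsFaceCycle n z) {i j : ℕ} (hi : i ≤ n) (hj : j ≤ n) (hij : i ≠ j) :
    z i ≠ z j := fun h => hij (hz.injOn hi hj h)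

theorem closing_notMem_pathEdges (hz : R.IsFaceCycle n z) : s(z n, z 0) ∉ pathEdges n z := by
  rintro ⟨i, hi, h⟩
  rw [mem_Iio] at hi
  have := hz.two_le
  rcases Sym2.eq_iff.1 h with ⟨h, -⟩ | ⟨h₀, hn⟩
  · exact hz.ne hi.le le_rfl hi.ne h
  · have := hz.injOn (mem_Iic.2 hi.le) (mem_Iic.2 (Nat.zero_le n)) h₀
    have := hz.injOn (mem_Iic.2 hi) (mem_Iic.2 le_rfl) hn
    omega

theorem exists_eq_append (hz : R.IsFaceCycle n z) {E : Set (Sym2 V)} (hE : pathEdges n z ⊆ E)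
    {t j : ℕ} (ht : t + j = n) {e : V × V} (he : e.1 = z 0) {l : List (V × V)}
    (hl : List.IsChain (ContourStep R.IsSucc E) ((z t, z (t + 1)) :: (l ++ [e]))) :
    ∃ T, (z t, z (t + 1)) :: l = (List.range' t (j + 1)).map (fun i => (z i, z (i + 1))) ++ T := by
  induction j generalizing t l with
  | zero => exact ⟨l, by simp⟩
  | succ j ih =>
    have hturn : turn E (z t, z (t + 1)) = (z (t + 1), z t) :=
      turn_of_mem (d := (z t, z (t + 1))) (hE ⟨t, mem_Iio.2 (by omega), rfl⟩)
    rcases l with - | ⟨⟨a, b⟩, l⟩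
    · have h := hl.rel.1
      rw [hturn, he] at h
      exact absurd h (hz.ne (Nat.zero_le n) (by omega) (by omega))
    · rw [List.cons_append, List.isChain_cons_cons] at hl
      obtain ⟨⟨ha, hb⟩, hl⟩ := hl
      rw [hturn] at ha hb
      obtain rfl := ha
      obtain rfl := hb.eq (hz.isSucc t (by omega))
      obtain ⟨T, hT⟩ := ih (by omega) hl
      exact ⟨T, by rw [List.range'_succ, List.map_cons, List.cons_append, hT]⟩

variable {F : Set (Sym2 V)}

theorem closing_notMem (hz : R.IsFaceCycle n z) (hF : IsForestOver G (z '' Iic n)ᶜ F) :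
    s(z n, z 0) ∉ pathEdges n z ∪ F := by
  rintro (h | h)
  · exact hz.closing_notMem_pathEdges h
  · obtain ⟨v, hv, hve⟩ := hF.exists_mem _ h
    rcases Sym2.mem_iff.1 hve with rfl | rfl
    exacts [hv (mem_image_of_mem z (mem_Iic.2 le_rfl)),
      hv (mem_image_of_mem z (mem_Iic.2 (Nat.zero_le n)))]

theorem not_isStraight (hz : R.IsFaceCycle n z) (hF : IsForestOver G (z '' Iic n)ᶜ F)
    (hturn : ∀ v ∈ (z '' Iic n)ᶜ, ¬ R.IsStraight F v) (v : V)
    (hv : R.IsStraight (pathEdges n z ∪ F) v) :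
    ¬ R.IsStraight (insert s(z n, z 0) (pathEdges n z ∪ F)) v := by
  by_cases hvz : v ∈ z '' Iic n
  · obtain ⟨_ | i, hi, rfl⟩ := hvz
    · intro htop
      rw [Sym2.eq_swap] at htop
      exact hz.closing_notMem hF (Sym2.eq_swap ▸
        hv.mem_of_subset htop (subset_insert _ _) (mem_insert _ _))
    · rw [mem_Iic] at hi
      have hsucc := hz.isSucc i hi
      refine not_isStraight_of_not_opposite (a := z i) (b := z (i + 2)) ?_ ?_ hsucc.ne
        hsucc.not_opposite
      · exact .inr (.inl ⟨i, hi, Sym2.eq_swap⟩)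
      · rcases hi.eq_or_lt with rfl | hi
        · exact .inl (by rw [← hz.eq_zero])
        · exact .inr (.inl ⟨i + 1, hi, rfl⟩)
  · exact absurd hv (mt (isStraight_pathEdges_union hvz).1 (hturn v hvz))

theorem exists_adj_of_length_eq (hz : R.IsFaceCycle n z) {v : V} (hv : (R.nbrs v).length = 4) :
    ∃ w, G.Adj v w ∧ ¬ ∃ i ≤ n, (z i, z (i + 1)) = (v, w) := by
  obtain ⟨a, b, c, d, h⟩ := List.length_eq_four.1 hv
  have hab : a ≠ b := by
    have := R.nodup_nbrs v
    grind
  have hadj (w : V) (hw : w = a ∨ w = b) : G.Adj v w := R.mem_nbrs.1 (by rw [h]; grind)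
  by_contra! hall
  obtain ⟨i, hi, hia⟩ := hall a (hadj a (.inl rfl))
  obtain ⟨j, hj, hjb⟩ := hall b (hadj b (.inr rfl))
  rw [Prod.mk.injEq] at hia hjb
  obtain rfl := hz.injOn hi hj (hia.1.trans hjb.1.symm)
  exact hab (hia.2.symm.trans hjb.2)

theorem spineContour (hz : R.IsFaceCycle n z) (hdeg : ∀ v, (R.nbrs v).length = 4)
    (hF : IsForestOver G (z '' Iic n)ᶜ F) (hturn : ∀ v ∈ (z '' Iic n)ᶜ, ¬ R.IsStraight F v)
    {P T : List (V × V)} (hP : ∀ d, d ∈ P ↔ ∃ i ≤ n, (z i, z (i + 1)) = d)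
    (h : R.Contour univ (pathEdges n z ∪ F) (P ++ T)) (hhead : (P ++ T).head? = some (z 0, z 1)) :
    R.SpineContour (pathEdges n z ∪ F) (insert s(z n, z 0) (pathEdges n z ∪ F)) P T where
  contour := h
  tree_subset := subset_insert _ _
  subset_edgeSet := by
    rintro e (rfl | ⟨i, hi, rfl⟩ | he)
    exacts [hz.eq_zero ▸ hz.adj n le_rfl, hz.adj i (mem_Iio.1 hi).le, hF.subset_edgeSet he]
  subsingleton := by
    rintro e ⟨rfl | he, he'⟩ f ⟨rfl | hf, hf'⟩
    exacts [rfl, absurd hf hf', absurd he he', absurd he he']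
  head_mem d hd := by
    rw [hhead] at hd
    obtain rfl := Option.some_injective _ hd
    exact .inl ⟨0, mem_Iio.2 (two_pos.trans_le hz.two_le), rfl⟩
  mem_top d hd := by
    obtain ⟨i, hi, rfl⟩ := (hP d).1 hd
    rcases hi.eq_or_lt with rfl | hi
    exacts [.inl (by rw [← hz.eq_zero]), .inr (.inl ⟨i, hi, rfl⟩)]
  exists_mem v := by
    obtain ⟨w, hvw, hw⟩ := hz.exists_adj_of_length_eq (hdeg v)
    have hmem := List.mem_append.1 (h.mem_iff (d := (v, w)).2 ⟨mem_univ v, hvw⟩)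
    exact ⟨(v, w), hmem.resolve_left (mt (hP _).1 hw), rfl⟩
  mem_prefix v w hvw := by
    have mem_fst (i : ℕ) (hi : i ≤ n) : z i ∈ P.map Prod.fst :=
      List.mem_map_of_mem (f := Prod.fst) ((hP _).2 ⟨i, hi, rfl⟩)
    rcases Sym2.eq_iff.1 (hvw.1.resolve_right hvw.2) with ⟨rfl, -⟩ | ⟨rfl, -⟩
    exacts [mem_fst n le_rfl, mem_fst 0 n.zero_le]
  not_isStraight := hz.not_isStraight hF hturn

theorem exists_spineContour [Finite V] (hz : R.IsFaceCycle n z) (hG : G.Preconnected)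
    (hdeg : ∀ v, (R.nbrs v).length = 4) : ∃ E top P T, R.SpineContour E top P T := by
  obtain ⟨ℓ₀, h₀⟩ := Contour.exists_path (R := R) hz.injOn fun i hi => hz.adj i hi.le
  obtain ⟨F, hF, hturn⟩ := exists_isForestOver R hG (z '' Iic n)ᶜ
    (compl_ne_univ.2 ⟨z 0, 0, Nat.zero_le n, rfl⟩)
  rw [← compl_compl (z '' Iic n)] at h₀
  obtain ⟨ℓ, h⟩ := h₀.union_isForestOver hF
  obtain ⟨l, hl⟩ := exists_isRotated_cons
    (h.mem_iff (d := (z 0, z 1)).2 ⟨mem_univ _, hz.adj 0 n.zero_le⟩)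
  replace h := h.rotate hl
  have hchain := h.chain fun v => chain_isSucc (hdeg v)
  rw [Cycle.chain_coe_cons] at hchain
  obtain ⟨T, hT⟩ := hz.exists_eq_append subset_union_left n.zero_add rfl hchain
  rw [hT] at h
  exact ⟨_, _, _, T, hz.spineContour hdeg hF hturn (by simp [Order.lt_add_one_iff]) h
    (by rw [← hT]; rfl)⟩

end IsFaceCycle

end FaceCycle

theorem Noncrossing.hasTwoPageBook [Finite V] (hR : R.Noncrossing) (hG : G.Preconnected)
    (hdeg : ∀ v, (R.nbrs v).length ≤ 4) : HasTwoPageBook G := by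
  cases subsingleton_or_nontrivial V
  · exact ⟨fun _ => 0, ∅, fun _ _ _ => Subsingleton.elim _ _,
      fun a b _ _ hab => absurd (Subsingleton.elim a b) hab.ne⟩
  · by_cases h : ∀ v, (R.nbrs v).length = 4
    · obtain ⟨n, z, hz⟩ := exists_isFaceCycle h
      obtain ⟨E, top, P, T, hspine⟩ := hz.exists_spineContour hG h
      exact hspine.hasTwoPageBook hR hdeg
    · push Not at h
      obtain ⟨r, hr⟩ := h
      obtain ⟨E, T, hspine⟩ := exists_spineContour_of_length_ne hG hr
      exact hspine.hasTwoPageBook hR hdeg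

end RotationSystem

/-- The restriction of a plane embedding along an injection of vertices. -/
def PlaneEmbedding.comap {V W : Type u} {G : SimpleGraph V} (E : PlaneEmbedding G) (f : W ↪ V) :
    PlaneEmbedding (G.comap f) where
  pos := E.pos ∘ f
  pos_inj := E.pos_inj.comp f.injective
  arc _ _ h := E.arc h
  arc_symm _ _ h := E.arc_symm h
  arc_curve _ _ h := E.arc_curve h
  arc_inter _ _ _ _ h₁ h₂ hne := E.arc_inter h₁ h₂ fun h => hne (Sym2.map.injective f.injective h)
  pos_arc _ _ h w hw := (E.pos_arc h (f w) hw).imp (f.injective ·) (f.injective ·)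

theorem RotationSystem.length_nbrs_le {V : Type u} [Finite V] {G : SimpleGraph V} {d : ℕ}
    (R : RotationSystem G) (hd : G.MaxDegreeLE d) (v : V) : (R.nbrs v).length ≤ d := by
  classical
  rw [← List.toFinset_card_of_nodup (R.nodup_nbrs v), ← Set.ncard_coe_finset]
  refine le_trans (Set.ncard_le_ncard (fun w hw => ?_) (Set.toFinite _)) (hd v)
  exact R.mem_nbrs.1 (List.mem_toFinset.1 hw)

section Components

variable {V : Type u} {G : SimpleGraph V}

theorem maxDegreeLE_induce [Finite V] {d : ℕ} (hd : G.MaxDegreeLE d) (s : Set V) :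
    (G.induce s).MaxDegreeLE d := fun v =>
  (Set.ncard_le_ncard_of_injOn Subtype.val (fun _ hw => hw) Subtype.val_injective.injOn
    (Set.toFinite _)).trans (hd v)

theorem HasTwoPageBook.exists_of_induce {s : Set V} (h : HasTwoPageBook (G.induce s)) :
    ∃ (x : V → ℕ) (top : Set (Sym2 V)), InjOn x s ∧
      ∀ a ∈ s, ∀ b ∈ s, ∀ p ∈ s, ∀ q ∈ s, G.Adj a b → G.Adj p q →
        (s(a, b) ∈ top ↔ s(p, q) ∈ top) → ¬ (x a < x p ∧ x p < x b ∧ x b < x q) := by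
  obtain ⟨x, top, hx, hbook⟩ := h
  have hext (v : V) (hv : v ∈ s) : Function.extend Subtype.val x 0 v = x ⟨v, hv⟩ :=
    Subtype.val_injective.extend_apply x 0 ⟨v, hv⟩
  have htop (a b : s) : s(a.1, b.1) ∈ Sym2.map Subtype.val '' top ↔ s(a, b) ∈ top :=
    (Sym2.map.injective Subtype.val_injective).mem_set_image (a := s(a, b))
  refine ⟨Function.extend Subtype.val x 0, Sym2.map Subtype.val '' top,
    fun u hu v hv huv => ?_, fun a ha b hb p hp q hq hab hpq hiff => ?_⟩
  · rw [hext u hu, hext v hv] at huv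
    exact congrArg Subtype.val (hx huv)
  · rw [hext a ha, hext b hb, hext p hp, hext q hq]
    exact hbook (a := ⟨a, ha⟩) (b := ⟨b, hb⟩) (p := ⟨p, hp⟩) (q := ⟨q, hq⟩) hab hpq
      ((htop ⟨a, ha⟩ ⟨b, hb⟩).symm.trans (hiff.trans (htop ⟨p, hp⟩ ⟨q, hq⟩)))

theorem hasTwoPageBook_of_forall_connectedComponent [Finite V]
    (h : ∀ c : G.ConnectedComponent, HasTwoPageBook (G.induce c.supp)) : HasTwoPageBook G := by
  choose y top hinj hbook using fun c => (h c).exists_of_induce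
  obtain ⟨n, ⟨k⟩⟩ := Finite.exists_equiv_fin G.ConnectedComponent
  let comp : V → G.ConnectedComponent := G.connectedComponentMk
  obtain ⟨N, hN⟩ := (Set.finite_range fun v => y (comp v) v).bddAbove
  have hlt (v : V) : y (comp v) v < N + 1 := Nat.lt_succ_of_le (hN (Set.mem_range_self v))
  let x (v : V) : ℕ := (N + 1) * k (comp v) + y (comp v) v
  have hdiv (v : V) : x v / (N + 1) = k (comp v) := by
    rw [Nat.mul_add_div N.succ_pos, Nat.div_eq_of_lt (hlt v), add_zero]
  have hcomp {u v : V} (huv : x u / (N + 1) = x v / (N + 1)) : comp u = comp v := by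
    rw [hdiv, hdiv] at huv
    exact k.injective (Fin.ext huv)
  have hadj {a b : V} (hab : G.Adj a b) : comp a = comp b :=
    SimpleGraph.ConnectedComponent.sound hab.reachable
  have hmem {a b : V} (hab : G.Adj a b) :
      s(a, b) ∈ {e | ∃ v ∈ e, e ∈ top (comp v)} ↔ s(a, b) ∈ top (comp a) := by
    simp [hadj hab]
  refine ⟨x, {e | ∃ v ∈ e, e ∈ top (comp v)}, fun u v huv => ?_,
    fun a b p q hab hpq hiff ⟨hap, hpb, hbq⟩ => ?_⟩
  · have hc : comp u = comp v := hcomp (congrArg (· / (N + 1)) huv)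
    simp only [x, hc, Nat.add_left_cancel_iff] at huv
    exact hinj (comp v) hc rfl huv
  · have hpa : comp p = comp a := hcomp <| le_antisymm
      ((Nat.div_le_div_right hpb.le).trans_eq (by rw [hdiv, hdiv, hadj hab]))
      (Nat.div_le_div_right hap.le)
    rw [hmem hab, hmem hpq, hpa] at hiff
    simp only [x, ← hadj hab, ← hadj hpq, hpa, Nat.add_lt_add_iff_left] at hap hpb hbq
    exact hbook (comp a) a rfl b (hadj hab).symm p hpa q ((hadj hpq).symm.trans hpa) hab hpq hiff
      ⟨hap, hpb, hbq⟩

theorem hasTwoPageBook_of_isPlanar [Finite V] (hG : G.IsPlanar) (hdeg : G.MaxDegreeLE 4) :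
    HasTwoPageBook G := by
  obtain ⟨E⟩ := hG
  refine hasTwoPageBook_of_forall_connectedComponent fun c => ?_
  obtain ⟨R, hR⟩ := exists_noncrossing_of_isPlanar ⟨E.comap (.subtype (· ∈ c.supp))⟩
  exact hR.hasTwoPageBook c.connected_toSimpleGraph.preconnected
    (R.length_nbrs_le (maxDegreeLE_induce hdeg c.supp))

end Components

/-- Every 4-planar graph admits a two-page book embedding: a linear
order of the vertices (an injective placement on the spine) and a partition of the
edges into two pages such that no two edges on the same page have alternating
endpoints. -/
theorem four_planar_two_page_book_embedding {V : Type u} [Fintype V]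
    (G : SimpleGraph V) (hplanar : G.IsPlanar) (hdeg : G.MaxDegreeLE 4) :
    ∃ (x : V → ℝ) (top : Set (Sym2 V)), Function.Injective x ∧ top ⊆ G.edgeSet ∧
      ∀ e ∈ G.edgeSet, ∀ e' ∈ G.edgeSet, (e ∈ top ↔ e' ∈ top) →
        ¬ Alternates x e e' := by
  obtain ⟨x, top, hx, hbook⟩ := hasTwoPageBook_of_isPlanar hplanar hdeg
  refine ⟨fun v => x v, top ∩ G.edgeSet, Nat.cast_injective.comp hx, inter_subset_right, ?_⟩
  rintro _ he _ he' hiff ⟨a, b, p, q, rfl, rfl, hap, hpb, hbq⟩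
  simp only [mem_inter_iff, he, he', and_true] at hiff
  exact hbook he he' hiff ⟨Nat.cast_lt.1 hap, Nat.cast_lt.1 hpb, Nat.cast_lt.1 hbq⟩
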